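/- arXiv:2106.04049 — 2 statements merged into one kernel-verified Lean document; each statement's English description precedes it below -/
import Mathlib

section
/- There is an absolute constant C₀ ≥ 1 such that for every C ≥ C₀ the following holds: if p is an odd prime with p > C^{1/2} and m = ⌈C·log p⌉, then the number of vectors b ∈ F_p^m with disc_{F_p}(b) > C/p² is at most (8·C^{−1/2}·p)^m. -/
open Finset Matrix

noncomputable section

/-- The sign `±1` associated to a Boolean. -/
def signb (R : Type*) [Ring R] (b : Bool) : R := if b then 1 else -1

open Classical in
/-- Uniform/counting probability of an event on a finite sample space. -/
def prob {Ω : Type*} [Fintype Ω] (E : Ω → Prop) : ℝ :=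
  ((Finset.univ.filter E).card : ℝ) / (Fintype.card Ω : ℝ)

/-- The symmetric random sign matrix determined by the Boolean data `ω`
(only the entries `ω i j` with `i ≤ j` are used); it is uniformly distributed
over symmetric `±1` matrices when `ω` is uniform. -/
def symMat (R : Type*) [Ring R] {n : ℕ} (ω : Fin n → Fin n → Bool) :
    Matrix (Fin n) (Fin n) R :=
  Matrix.of fun i j => signb R (ω (min i j) (max i j))

/-- Atom probability of a vector over `ZMod p` w.r.t. i.i.d. Rademacher signs. -/
def rho (p : ℕ) {ι : Type*} [Fintype ι] [DecidableEq ι] (w : ι → ZMod p) : ℝ :=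
  ⨆ r : ZMod p, prob (fun ξ : ι → Bool => ∑ i, signb (ZMod p) (ξ i) * w i = r)

/-- Discrepancy of a vector over `ZMod p` w.r.t. i.i.d. Rademacher signs. -/
def disc (p : ℕ) {ι : Type*} [Fintype ι] [DecidableEq ι] (w : ι → ZMod p) : ℝ :=
  ⨆ x : ZMod p,
    |prob (fun ξ : ι → Bool => ∑ i, signb (ZMod p) (ξ i) * w i = x) - 1 / (p : ℝ)|

lemma map_sum_prod_aux {p m : ℕ} [NeZero p] (c : AddChar (ZMod p) ℂ) (s : Finset (Fin m)) (f : Fin m → ZMod p) :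
    c (∑ i ∈ s, f i) = ∏ i ∈ s, c (f i) := by
  classical
  induction s using Finset.induction_on with
  | empty => simp
  | insert a s ha ih => rw [Finset.sum_insert ha, Finset.prod_insert ha, AddChar.map_add_eq_mul, ih]

/-- minimal absolute value -/
def fabs {p : ℕ} (z : ZMod p) : ℝ := |(z.valMinAbs : ℝ)|

lemma norm_char_le {p : ℕ} [NeZero p] (z : ZMod p) :
    ‖ZMod.stdAddChar z + ZMod.stdAddChar (-z)‖
      ≤ 2 * Real.exp (-2 * (fabs (2 * z) / p) ^ 2) := by
  have hp : (0 : ℝ) < p := by exact_mod_cast Nat.pos_of_ne_zero (NeZero.ne p)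
  have h1 : ‖ZMod.stdAddChar z + ZMod.stdAddChar (-z)‖ = ‖ZMod.stdAddChar (2 * z) + 1‖ := by
    have hn : ‖(ZMod.stdAddChar z : ℂ)‖ = 1 := AddChar.norm_apply _ _
    calc ‖ZMod.stdAddChar z + ZMod.stdAddChar (-z)‖
        = ‖(ZMod.stdAddChar z : ℂ)‖ * ‖ZMod.stdAddChar z + ZMod.stdAddChar (-z)‖ := by
          rw [hn, one_mul]
      _ = ‖ZMod.stdAddChar (2 * z) + 1‖ := by
          rw [← norm_mul, mul_add, ← AddChar.map_add_eq_mul, ← AddChar.map_add_eq_mul,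
            two_mul, add_neg_cancel, AddChar.map_zero_eq_one]
  rw [h1]
  set k : ℤ := (2 * z).valMinAbs with hk
  have hz : (2 * z : ZMod p) = (k : ZMod p) := by rw [hk, ZMod.coe_valMinAbs]
  have hkp : |(k : ℝ)| ≤ p / 2 := by
    have := ZMod.natAbs_valMinAbs_le (2 * z)
    rw [← hk] at this
    have h2 : 2 * k.natAbs ≤ p := by omega
    have h3 : (2 : ℝ) * (k.natAbs : ℝ) ≤ p := by exact_mod_cast h2
    rw [Nat.cast_natAbs] at h3
    push_cast at h3
    linarith
  have hf : fabs (2 * z) = |(k : ℝ)| := rfl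
  rw [hf, hz, ZMod.stdAddChar_coe]
  set th : ℝ := Real.pi * k / p with hth
  have h2 : Complex.exp (2 * Real.pi * Complex.I * (k : ℤ) / p) + 1
      = Complex.exp (th * Complex.I) * (2 * Real.cos th : ℝ) := by
    have : (2 * Real.pi * Complex.I * (k : ℤ) / p : ℂ) = th * Complex.I + th * Complex.I := by
      rw [hth]; push_cast; ring
    rw [this]
    push_cast
    rw [Complex.two_cos, mul_add, ← Complex.exp_add, ← Complex.exp_add]
    congr 1
    rw [neg_mul, add_neg_cancel, Complex.exp_zero]
  rw [h2, norm_mul, Complex.norm_exp_ofReal_mul_I, one_mul, Complex.norm_real, Real.norm_eq_abs,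
    abs_mul, abs_two]
  have habs : |th| ≤ Real.pi / 2 := by
    rw [hth, abs_div, abs_mul, abs_of_pos Real.pi_pos, abs_of_pos hp, div_le_iff₀ hp]
    nlinarith [Real.pi_pos]
  have hc0 : 0 ≤ Real.cos th := Real.cos_nonneg_of_mem_Icc (abs_le.mp habs |> fun h => ⟨by linarith [h.1], h.2⟩)
  rw [abs_of_nonneg hc0]
  have h3 : Real.cos th ≤ 1 - 2 / Real.pi ^ 2 * th ^ 2 :=
    Real.cos_le_one_sub_mul_cos_sq (by linarith [Real.pi_pos])
  have h4 : 2 / Real.pi ^ 2 * th ^ 2 = 2 * (|(k : ℝ)| / p) ^ 2 := by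
    rw [hth, div_pow, div_pow, sq_abs]
    have := Real.pi_pos.ne'
    field_simp
  have h5 := Real.add_one_le_exp (-2 * (|(k : ℝ)| / p) ^ 2)
  linarith

lemma signb_sum {p m : ℕ} [NeZero p] (b : Fin m → ZMod p) (t : ZMod p) :
    ∑ ξ : Fin m → Bool, (ZMod.stdAddChar (t * ∑ i, signb (ZMod p) (ξ i) * b i) : ℂ)
      = ∏ i, (ZMod.stdAddChar (t * b i) + ZMod.stdAddChar (-(t * b i))) := by
  have : ∀ i, (ZMod.stdAddChar (t * b i) + ZMod.stdAddChar (-(t * b i)) : ℂ)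
      = ∑ j : Bool, ZMod.stdAddChar (t * (signb (ZMod p) j * b i)) := by
    intro i
    simp [signb]
  simp_rw [this]
  rw [Finset.prod_univ_sum, Fintype.piFinset_univ]
  refine Finset.sum_congr rfl fun ξ _ => ?_
  rw [Finset.mul_sum]
  exact map_sum_prod_aux _ _ _

lemma prob_formula {p m : ℕ} [Fact p.Prime] (b : Fin m → ZMod p) (x : ZMod p) :
    (prob (fun ξ : Fin m → Bool => ∑ i, signb (ZMod p) (ξ i) * b i = x) : ℂ)
      = (1 / (p * 2 ^ m)) * ∑ t : ZMod p, ZMod.stdAddChar (-(t * x)) *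
        ∏ i, (ZMod.stdAddChar (t * b i) + ZMod.stdAddChar (-(t * b i))) := by
  classical
  have hp : (p : ℂ) ≠ 0 := by exact_mod_cast (Fact.out : p.Prime).ne_zero
  have key : ∀ ξ : Fin m → Bool, ∑ t : ZMod p, (ZMod.stdAddChar (-(t * x)) : ℂ) *
      ZMod.stdAddChar (t * ∑ i, signb (ZMod p) (ξ i) * b i)
      = if ∑ i, signb (ZMod p) (ξ i) * b i = x then (p : ℂ) else 0 := by
    intro ξ
    have h := AddChar.sum_mulShift (∑ i, signb (ZMod p) (ξ i) * b i - x)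
      (ZMod.isPrimitive_stdAddChar p)
    rw [ZMod.card] at h
    simp only [sub_eq_zero] at h
    push_cast at h
    rw [← h]
    refine Finset.sum_congr rfl fun t _ => ?_
    rw [← AddChar.map_add_eq_mul]
    congr 1
    ring
  have key2 : ∑ t : ZMod p, (ZMod.stdAddChar (-(t * x)) : ℂ) *
        ∏ i, (ZMod.stdAddChar (t * b i) + ZMod.stdAddChar (-(t * b i)))
      = ∑ ξ : Fin m → Bool, if ∑ i, signb (ZMod p) (ξ i) * b i = x then (p : ℂ) else 0 := by
    rw [← Finset.sum_congr rfl fun ξ _ => key ξ, Finset.sum_comm]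
    refine Finset.sum_congr rfl fun t _ => ?_
    rw [← signb_sum, Finset.mul_sum]
  rw [key2, ← Finset.sum_filter, Finset.sum_const, nsmul_eq_mul]
  unfold prob
  rw [Fintype.card_fun, Fintype.card_bool, Fintype.card_fin]
  push_cast
  field_simp

lemma exists_t {p m : ℕ} [Fact p.Prime] (b : Fin m → ZMod p) (A : ℝ) (hA : 0 ≤ A)
    (h : A < disc p b) :
    ∃ t : ZMod p, t ≠ 0 ∧ A < Real.exp (-2 * ∑ i, (fabs (2 * (t * b i)) / p) ^ 2) := by
  classical
  obtain ⟨x, hx⟩ := exists_lt_of_lt_ciSup h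
  by_contra! hcon
  have hp : (0 : ℝ) < p := by exact_mod_cast (Fact.out : p.Prime).pos
  have hpc : (p : ℂ) ≠ 0 := by exact_mod_cast hp.ne'
  have hf := prob_formula b x
  rw [← Finset.add_sum_erase _ _ (Finset.mem_univ (0 : ZMod p))] at hf
  simp only [zero_mul, neg_zero, AddChar.map_zero_eq_one, one_mul, Finset.prod_const,
    Finset.card_univ, Fintype.card_fin, one_add_one_eq_two] at hf
  set S : ℂ := ∑ t ∈ Finset.univ.erase (0 : ZMod p), ZMod.stdAddChar (-(t * x)) *
        ∏ i, (ZMod.stdAddChar (t * b i) + ZMod.stdAddChar (-(t * b i))) with hS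
  have hSn : ‖S‖ ≤ p * (2 ^ m * A) := by
    calc ‖S‖ ≤ ∑ t ∈ Finset.univ.erase (0 : ZMod p), 2 ^ m * A := by
          refine norm_sum_le_of_le _ fun t ht => ?_
          rw [norm_mul, AddChar.norm_apply, one_mul, norm_prod]
          calc ∏ i, ‖(ZMod.stdAddChar (t * b i) + ZMod.stdAddChar (-(t * b i)) : ℂ)‖
              ≤ ∏ i : Fin m, (2 * Real.exp (-2 * (fabs (2 * (t * b i)) / p) ^ 2)) :=
                Finset.prod_le_prod (fun _ _ => norm_nonneg _) fun i _ => norm_char_le _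
            _ = 2 ^ m * Real.exp (-2 * ∑ i, (fabs (2 * (t * b i)) / p) ^ 2) := by
                rw [Finset.prod_mul_distrib, Finset.prod_const, Finset.card_univ,
                  Fintype.card_fin, ← Real.exp_sum, Finset.mul_sum]
            _ ≤ _ := by
                gcongr
                exact hcon t (Finset.ne_of_mem_erase ht)
      _ ≤ ∑ t : ZMod p, 2 ^ m * A :=
          Finset.sum_le_sum_of_subset_of_nonneg (Finset.erase_subset _ _)
            fun _ _ _ => by positivity
      _ = _ := by rw [Finset.sum_const, Finset.card_univ, ZMod.card, nsmul_eq_mul]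
  have hd : ((prob (fun ξ : Fin m → Bool => ∑ i, signb (ZMod p) (ξ i) * b i = x)
      - 1 / (p : ℝ) : ℝ) : ℂ) = (1 / (p * 2 ^ m)) * S := by
    push_cast
    rw [hf]
    field_simp
    ring
  have h1 := congrArg norm hd
  rw [Complex.norm_real, Real.norm_eq_abs, norm_mul] at h1
  have h2 : ‖(1 / (p * 2 ^ m) : ℂ)‖ = 1 / (p * 2 ^ m) := by simp
  rw [h1, h2] at hx
  have : 1 / (p * 2 ^ m) * ‖S‖ ≤ 1 / (p * 2 ^ m) * (p * (2 ^ m * A)) := by gcongr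
  have h3 : 1 / ((p : ℝ) * 2 ^ m) * (p * (2 ^ m * A)) = A := by field_simp
  linarith

lemma geom_bound (q : ℝ) (hq : 0 < q) (n : ℕ) :
    ∑ v ∈ Finset.range n, Real.exp (-q * (v + 1 : ℕ)) ≤ 1 / q := by
  have : ∀ n : ℕ, q * ∑ v ∈ Finset.range n, Real.exp (-q * (v + 1 : ℕ))
      ≤ 1 - Real.exp (-q * n) := by
    intro n
    induction n with
    | zero => simp
    | succ n ih =>
      rw [Finset.sum_range_succ, mul_add]
      have h1 : Real.exp (-q * n) = Real.exp q * Real.exp (-q * (n + 1 : ℕ)) := by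
        rw [← Real.exp_add]; push_cast; ring_nf
      have h2 := Real.add_one_le_exp q
      have h3 := Real.exp_pos (-q * (n + 1 : ℕ))
      nlinarith
  rw [le_div_iff₀ hq]
  have := this n
  have := Real.exp_pos (-q * n)
  linarith

lemma gauss_sum {p : ℕ} [Fact p.Prime] (q : ℝ) (hq : 0 < q) :
    ∑ y : ZMod p, Real.exp (-(q * fabs y) ^ 2 / 2) ≤ 1 + 2 * Real.exp (1 / 2) / q := by
  classical
  obtain ⟨n, rfl⟩ : ∃ n, p = n + 1 := ⟨p - 1, by have := (Fact.out : p.Prime).pos; omega⟩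
  set E : ℕ → ℝ := fun v => Real.exp (1 / 2) * Real.exp (-q * v) with hE
  have hb : ∀ y : ZMod (n + 1), Real.exp (-(q * fabs y) ^ 2 / 2) ≤ E y.val + E (n + 1 - y.val) := by
    intro y
    have h1 : Real.exp (-(q * fabs y) ^ 2 / 2) ≤ E (min y.val (n + 1 - y.val)) := by
      rw [← ZMod.valMinAbs_natAbs_eq_min, hE]
      simp only
      rw [← Real.exp_add, Nat.cast_natAbs]
      push_cast
      change _ ≤ Real.exp (1 / 2 + -q * fabs y)
      apply Real.exp_le_exp.mpr
      nlinarith [sq_nonneg (q * fabs y - 1)]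
    have h0 : ∀ v, 0 ≤ E v := fun v => by positivity
    rcases min_choice y.val (n + 1 - y.val) with h | h <;> rw [h] at h1
    · linarith [h0 (n + 1 - y.val)]
    · linarith [h0 y.val]
  have h2 : ∑ y : ZMod (n + 1), Real.exp (-(q * fabs y) ^ 2 / 2)
      = Real.exp (-(q * fabs (0 : ZMod (n + 1))) ^ 2 / 2)
        + ∑ i : Fin n, Real.exp (-(q * fabs (p := n + 1) (Fin.succ i)) ^ 2 / 2) :=
    Fin.sum_univ_succ (n := n) (fun y => Real.exp (-(q * fabs (p := n + 1) y) ^ 2 / 2))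
  rw [h2]
  have h3 : Real.exp (-(q * fabs (0 : ZMod (n + 1))) ^ 2 / 2) = 1 := by
    simp [fabs]
  have h4 : ∑ i : Fin n, Real.exp (-(q * fabs (p := n + 1) (Fin.succ i)) ^ 2 / 2)
      ≤ ∑ i : Fin n, (E (i + 1) + E (n - i)) := by
    refine Finset.sum_le_sum fun i _ => ?_
    refine (hb _).trans (le_of_eq ?_)
    have : ZMod.val (n := n + 1) (Fin.succ i) = i + 1 := rfl
    rw [this]
    congr 2
    omega
  have h5 : ∑ i ∈ Finset.range n, E (i + 1) ≤ Real.exp (1 / 2) * (1 / q) := by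
    simp only [hE]
    rw [← Finset.mul_sum]
    gcongr
    exact geom_bound q hq n
  have h6 : ∑ i ∈ Finset.range n, E (n - i) = ∑ i ∈ Finset.range n, E (i + 1) := by
    rw [← Finset.sum_range_reflect]
    refine Finset.sum_congr rfl fun i hi => ?_
    have := Finset.mem_range.mp hi
    congr 1
    omega
  rw [Finset.sum_add_distrib, Fin.sum_univ_eq_sum_range (fun i => E (i + 1)),
    Fin.sum_univ_eq_sum_range (fun i => E (n - i)), h6] at h4
  rw [h3]
  have : 2 * Real.exp (1 / 2) / q = 2 * (Real.exp (1 / 2) * (1 / q)) := by ring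
  linarith

lemma count_t {p m : ℕ} [Fact p.Prime] (hp2 : Odd p) (q : ℝ) (hq : 0 < q) (t : ZMod p)
    (ht : t ≠ 0) (T : Finset (Fin m → ZMod p))
    (hT : ∀ b ∈ T, ∑ i, (q * fabs (2 * (t * b i))) ^ 2 ≤ m) :
    (T.card : ℝ) ≤ (Real.exp (1 / 2) * (1 + 2 * Real.exp (1 / 2) / q)) ^ m := by
  classical
  have h2 : (2 : ZMod p) ≠ 0 := by
    have : Fact (2 < p) := ⟨by
      have := (Fact.out : p.Prime).two_le
      obtain ⟨k, hk⟩ := hp2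
      omega⟩
    exact Ring.two_ne_zero (by rw [ZMod.ringChar_zmod_n]; have := this.out; omega)
  have h2t : (2 * t : ZMod p) ≠ 0 := mul_ne_zero h2 ht
  calc (T.card : ℝ) = ∑ b ∈ T, 1 := by simp
    _ ≤ ∑ b ∈ T, ∏ i, (Real.exp (1 / 2) * Real.exp (-(q * fabs (2 * (t * b i))) ^ 2 / 2)) := by
        refine Finset.sum_le_sum fun b hb => ?_
        simp_rw [← Real.exp_add]
        rw [← Real.exp_sum]
        apply Real.one_le_exp
        rw [Finset.sum_add_distrib]
        simp_rw [neg_div]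
        rw [Finset.sum_neg_distrib]
        have := hT b hb
        rw [Finset.sum_const, Finset.card_univ, Fintype.card_fin, nsmul_eq_mul, ← Finset.sum_div]
        linarith
    _ ≤ ∑ b : Fin m → ZMod p,
          ∏ i, (Real.exp (1 / 2) * Real.exp (-(q * fabs (2 * (t * b i))) ^ 2 / 2)) :=
        Finset.sum_le_sum_of_subset_of_nonneg (Finset.subset_univ _)
          fun _ _ _ => by positivity
    _ = (Real.exp (1 / 2) * ∑ y : ZMod p, Real.exp (-(q * fabs y) ^ 2 / 2)) ^ m := by
        have h := Finset.prod_univ_sum (fun _ : Fin m => (Finset.univ : Finset (ZMod p)))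
          (fun _ y => Real.exp (1 / 2) * Real.exp (-(q * fabs (2 * (t * y))) ^ 2 / 2))
        rw [Fintype.piFinset_univ] at h
        rw [← h, Finset.prod_const, Finset.card_univ, Fintype.card_fin, ← Finset.mul_sum]
        congr 2
        refine Fintype.sum_equiv (Equiv.mulLeft₀ (2 * t) h2t) _ _ fun y => ?_
        simp [mul_assoc]
    _ ≤ _ := by
        gcongr
        exact gauss_sum q hq

/-- Counting vectors with large discrepancy: for `C ≥ C₀`, odd primes `p > C^{1/2}`
and `m = ⌈C log p⌉`, the number of `b ∈ F_p^m` with `disc(b) > C/p²` is at most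
`(8 C^{-1/2} p)^m`. -/
theorem count_large_disc_vectors :
    ∃ C₀ : ℝ, 1 ≤ C₀ ∧
      ∀ C : ℝ, C₀ ≤ C →
        ∀ p : ℕ, p.Prime → Odd p → C ^ ((1 : ℝ) / 2) < (p : ℝ) →
          ∀ m : ℕ, m = ⌈C * Real.log p⌉₊ →
            ({b : Fin m → ZMod p | C / (p : ℝ) ^ 2 < disc p b}.ncard : ℝ)
              ≤ (8 * C ^ (-(1 : ℝ) / 2) * (p : ℝ)) ^ m := by
  refine ⟨100, by norm_num, ?_⟩
  intro C hC p hp hodd hCp m hm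
  classical
  haveI : Fact p.Prime := ⟨hp⟩
  have hC0 : 0 < C := by linarith
  have hp0 : (0 : ℝ) < p := by exact_mod_cast hp.pos
  have hsq0 : 0 < C ^ ((1 : ℝ) / 2) := by positivity
  have hsq : (C ^ ((1 : ℝ) / 2)) ^ 2 = C := by
    rw [← Real.sqrt_eq_rpow, Real.sq_sqrt hC0.le]
  obtain ⟨q, hqdef⟩ : ∃ q, q = C ^ ((1 : ℝ) / 2) / p := ⟨_, rfl⟩
  have hq : 0 < q := by rw [hqdef]; positivity
  have hq1 : q ≤ 1 := by rw [hqdef, div_le_one hp0]; exact hCp.le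
  have hq2 : q ^ 2 = C / p ^ 2 := by rw [hqdef, div_pow, hsq]
  have hrhs : 8 * C ^ (-(1 : ℝ) / 2) * (p : ℝ) = 8 / q := by
    rw [hqdef, show (-(1 : ℝ) / 2) = -(1 / 2) by ring, Real.rpow_neg hC0.le]
    field_simp
  have hmC : C * Real.log p ≤ m := by rw [hm]; exact Nat.le_ceil _
  rw [hrhs]
  set T : ZMod p → Finset (Fin m → ZMod p) := fun t =>
    Finset.univ.filter fun b => ∑ i, (q * fabs (2 * (t * b i))) ^ 2 ≤ m with hTdef
  have hsub : {b : Fin m → ZMod p | C / (p : ℝ) ^ 2 < disc p b}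
      ⊆ (((Finset.univ.erase (0 : ZMod p)).biUnion T : Finset _) : Set (Fin m → ZMod p)) := by
    intro b hb
    obtain ⟨t, ht, hlt⟩ := exists_t b _ (by positivity) hb
    simp only [Finset.coe_biUnion, Set.mem_iUnion, Finset.mem_coe]
    refine ⟨t, Finset.mem_erase.mpr ⟨ht, Finset.mem_univ _⟩, ?_⟩
    simp only [hTdef, Finset.mem_filter, Finset.mem_univ, true_and]
    have h1 : Real.exp (-2 * Real.log p) < Real.exp (-2 * ∑ i, (fabs (2 * (t * b i)) / p) ^ 2) := by
      refine lt_of_le_of_lt ?_ hlt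
      have : Real.exp (-2 * Real.log p) = 1 / p ^ 2 := by
        rw [show -2 * Real.log p = -(Real.log p + Real.log p) by ring, Real.exp_neg, Real.exp_add,
          Real.exp_log hp0]
        ring
      rw [this]
      gcongr
      linarith
    have h2 := Real.exp_lt_exp.mp h1
    have h3 : ∑ i, (q * fabs (2 * (t * b i))) ^ 2 = C * ∑ i, (fabs (2 * (t * b i)) / p) ^ 2 := by
      rw [Finset.mul_sum]
      refine Finset.sum_congr rfl fun i _ => ?_
      rw [mul_pow, hq2]
      ring
    rw [h3]
    nlinarith
  have hcard : ({b : Fin m → ZMod p | C / (p : ℝ) ^ 2 < disc p b}.ncard : ℝ)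
      ≤ p * (Real.exp (1 / 2) * (1 + 2 * Real.exp (1 / 2) / q)) ^ m := by
    have h1 := Set.ncard_le_ncard hsub (Finset.finite_toSet _)
    rw [Set.ncard_coe_finset] at h1
    have h2 := h1.trans Finset.card_biUnion_le
    calc _ ≤ ((∑ t ∈ Finset.univ.erase (0 : ZMod p), (T t).card : ℕ) : ℝ) := by exact_mod_cast h2
      _ = ∑ t ∈ Finset.univ.erase (0 : ZMod p), ((T t).card : ℝ) := by push_cast; rfl
      _ ≤ ∑ t ∈ Finset.univ.erase (0 : ZMod p),
            (Real.exp (1 / 2) * (1 + 2 * Real.exp (1 / 2) / q)) ^ m :=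
          Finset.sum_le_sum fun t ht => count_t hodd q hq t (Finset.ne_of_mem_erase ht) _
            fun b hb => (Finset.mem_filter.mp hb).2
      _ ≤ ∑ t : ZMod p, (Real.exp (1 / 2) * (1 + 2 * Real.exp (1 / 2) / q)) ^ m :=
          Finset.sum_le_sum_of_subset_of_nonneg (Finset.erase_subset _ _)
            fun _ _ _ => by positivity
      _ = _ := by rw [Finset.sum_const, Finset.card_univ, ZMod.card, nsmul_eq_mul]
  refine hcard.trans ?_
  have hpm : (p : ℝ) ≤ (Real.exp (1 / 100)) ^ m := by
    rw [← Real.exp_nat_mul]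
    rw [← Real.log_le_iff_le_exp hp0]
    have : 0 ≤ Real.log p := Real.log_nonneg (by exact_mod_cast hp.one_le)
    nlinarith
  have he : Real.exp (1 / 2) * Real.exp (1 / 2) = Real.exp 1 := by
    rw [← Real.exp_add]; norm_num
  have he1 := Real.exp_one_lt_d9
  have hh : Real.exp (1 / 2) ≤ 1.65 := by
    by_contra! h
    nlinarith
  have hs : Real.exp (1 / 100) ≤ 1.02 := by
    have := Real.exp_bound_div_one_sub_of_interval (x := 1 / 100) (by norm_num) (by norm_num)
    refine this.trans (by norm_num)
  have hbase : Real.exp (1 / 2) * (1 + 2 * Real.exp (1 / 2) / q) ≤ 7.1 / q := by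
    rw [le_div_iff₀ hq]
    have : Real.exp (1 / 2) * (1 + 2 * Real.exp (1 / 2) / q) * q
        = Real.exp (1 / 2) * q + 2 * (Real.exp (1 / 2) * Real.exp (1 / 2)) := by
      field_simp
    rw [this, he]
    nlinarith [Real.exp_pos (1 / 2)]
  calc (p : ℝ) * (Real.exp (1 / 2) * (1 + 2 * Real.exp (1 / 2) / q)) ^ m
      ≤ 1.02 ^ m * (7.1 / q) ^ m := by
        gcongr
        exact hpm.trans (by gcongr)
    _ = (1.02 * (7.1 / q)) ^ m := by rw [mul_pow]
    _ ≤ (8 / q) ^ m := by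
        gcongr
        rw [← mul_div_assoc]
        gcongr
        norm_num
end
end

section
/- There exist a constant c > 0 and a constant n₀ such that for all n ≥ n₀, the n×n random symmetric Rademacher matrix M_n has simple spectrum (i.e., its n real eigenvalues are pairwise distinct) with probability at least 1 − exp(−c·n^{1/2}·(log n)^{1/4}). -/
open Finset Matrix

noncomputable section

section Piece1

def wt (μ : ℝ) (s : SignType) : ℝ := if s = 0 then 1 - μ else μ / 2

def WW {ι : Type} [Fintype ι] (μ : ι → ℝ) (Y : ι → SignType) : ℝ := ∏ i, wt (μ i) (Y i)

open Classical in
def ff {ι : Type} [Fintype ι] [DecidableEq ι] (μ : ι → ℝ) (v : ι → ℝ) : ℝ :=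
  ∑ Y : ι → SignType, if ∑ i, ((Y i : SignType) : ℝ) * v i = 0 then WW μ Y else 0

def cc {p : ℕ} [NeZero p] (x : ZMod p) : ℝ := (ZMod.stdAddChar x).re

theorem sum_signType {M : Type*} [AddCommMonoid M] (f : SignType → M) :
    ∑ s, f s = f 0 + (f (-1) + f 1) := by
  rw [SignType.univ_eq]
  rw [Finset.sum_insert (by decide), Finset.sum_insert (by decide), Finset.sum_singleton]

theorem exists_zmod_model {ι : Type} [Fintype ι] [DecidableEq ι] (v : ι → ℝ) (P0 : ℕ) :
    ∃ p : ℕ, p.Prime ∧ P0 ≤ p ∧ 3 ≤ p ∧ ∃ w : ι → ZMod p, ∀ k : ι → ℤ, (∀ i, |k i| ≤ 2) →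
      (∑ i, (k i : ℝ) * v i = 0 ↔ ∑ i, (k i : ZMod p) * w i = 0) := by
  classical
  let K : Finset (ι → ℤ) := Fintype.piFinset (fun _ => Finset.Icc (-2) 2)
  let ι' := {k : ι → ℤ // k ∈ K ∧ ∑ i, (k i : ℝ) * v i ≠ 0}
  have : Finite ι' := Set.Finite.subset K.finite_toSet (fun k hk => hk.1)
  obtain ⟨f, hf⟩ := Module.exists_dual_forall_apply_ne_zero (K := ℚ) (M := ℝ)
    (fun k : ι' => ∑ i, (k.1 i : ℝ) * v i) (fun k => k.2.2)
  let g : ι → ℚ := fun i => f (v i)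
  let N : ℕ := ∏ i, (g i).den
  have hN : N ≠ 0 := Finset.prod_ne_zero_iff.2 (fun i _ => (g i).den_nz)
  have hz : ∀ i, ∃ z : ℤ, (z : ℚ) = N * g i := by
    intro i
    have : (g i).den ∣ N := Finset.dvd_prod_of_mem _ (Finset.mem_univ i)
    obtain ⟨m, hm⟩ := this
    refine ⟨m * (g i).num, ?_⟩
    rw [hm]
    push_cast
    have := Rat.mul_den_eq_num (g i)
    rw [← this]; ring
  choose z hz using hz
  obtain ⟨p, hp1, hp⟩ := Nat.exists_infinite_primes (P0 + 3 + (∑ i, 2 * (z i).natAbs) + 1)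
  refine ⟨p, hp, by omega, by omega, fun i => (z i : ZMod p), fun k hk => ?_⟩
  have hfk : ∑ i, (k i : ℚ) * (z i : ℚ) = N * f (∑ i, (k i : ℝ) * v i) := by
    rw [map_sum, Finset.mul_sum]
    refine Finset.sum_congr rfl fun i _ => ?_
    rw [hz]
    have : (k i : ℝ) * v i = (k i : ℤ) • v i := by simp
    rw [this, map_zsmul]
    simp only [zsmul_eq_mul]; ring
  have h1 : ∑ i, (k i : ℝ) * v i = 0 ↔ ∑ i, k i * z i = 0 := by
    constructor
    · intro h
      rw [h, map_zero, mul_zero] at hfk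
      exact_mod_cast hfk
    · intro h
      by_contra hne
      have hkK : k ∈ K := by
        simp only [K, Fintype.mem_piFinset, Finset.mem_Icc]
        intro i; exact abs_le.1 (hk i)
      have := hf ⟨k, hkK, hne⟩
      simp only at this
      have h' : ∑ i, (k i : ℚ) * (z i : ℚ) = 0 := by exact_mod_cast h
      rw [h'] at hfk
      rcases mul_eq_zero.1 hfk.symm with h | h
      · exact hN (by exact_mod_cast h)
      · exact this h
  rw [h1]
  have h2 : ∑ i, (k i : ZMod p) * (z i : ZMod p) = ((∑ i, k i * z i : ℤ) : ZMod p) := by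
    push_cast; rfl
  rw [h2, ZMod.intCast_zmod_eq_zero_iff_dvd _ p]
  constructor
  · intro h; rw [h]; simp
  · intro h
    apply Int.eq_zero_of_abs_lt_dvd h
    calc |∑ i, k i * z i| ≤ ∑ i, |k i * z i| := Finset.abs_sum_le_sum_abs _ _
      _ ≤ ∑ i, 2 * |z i| := by
          apply Finset.sum_le_sum; intro i _
          rw [abs_mul]; exact mul_le_mul_of_nonneg_right (hk i) (abs_nonneg _)
      _ = ((∑ i, 2 * (z i).natAbs : ℕ) : ℤ) := by push_cast; rfl
      _ < p := by exact_mod_cast (by omega)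

section FT
variable {p : ℕ} [NeZero p]

theorem cc_zero : cc (0 : ZMod p) = 1 := by simp [cc]

theorem norm_chi (x : ZMod p) : ‖(ZMod.stdAddChar x : ℂ)‖ = 1 := by
  exact AddChar.norm_apply _ _

theorem cc_le_one (x : ZMod p) : cc x ≤ 1 := by
  have := Complex.re_le_norm (ZMod.stdAddChar x)
  rw [norm_chi] at this; exact this

theorem neg_one_le_cc (x : ZMod p) : -1 ≤ cc x := by
  have := Complex.abs_re_le_norm (ZMod.stdAddChar x)
  rw [norm_chi] at this; exact (abs_le.1 this).1

theorem chi_neg (x : ZMod p) : (ZMod.stdAddChar (-x) : ℂ) = (starRingEnd ℂ) (ZMod.stdAddChar x) :=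
  AddChar.map_neg_eq_conj _ _

theorem chi_add_chi_neg (x : ZMod p) :
    (ZMod.stdAddChar x : ℂ) + ZMod.stdAddChar (-x) = 2 * (cc x : ℂ) := by
  rw [chi_neg, Complex.add_conj]; simp [cc]

theorem cc_two_mul (x : ZMod p) : cc (2 * x) = 2 * cc x ^ 2 - 1 := by
  have h1 : (ZMod.stdAddChar (2 * x) : ℂ) = ZMod.stdAddChar x * ZMod.stdAddChar x := by
    rw [two_mul, AddChar.map_add_eq_mul]
  have h2 := norm_chi x
  have h3 : (ZMod.stdAddChar x : ℂ).re * (ZMod.stdAddChar x : ℂ).re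
      + (ZMod.stdAddChar x : ℂ).im * (ZMod.stdAddChar x : ℂ).im = 1 := by
    have := Complex.normSq_eq_norm_sq (ZMod.stdAddChar x)
    rw [h2, Complex.normSq_apply] at this; linarith
  unfold cc
  rw [h1, Complex.mul_re]; nlinarith

theorem abs_cc_le (x : ZMod p) : |cc x| ≤ 1 - 1 / 4 * (1 - cc (2 * x)) := by
  rw [cc_two_mul]
  rcases abs_cases (cc x) with ⟨h, _⟩ | ⟨h, _⟩ <;> rw [h] <;>
    nlinarith [sq_nonneg (cc x - 1), sq_nonneg (cc x + 1)]

theorem sum_chi (b : ZMod p) :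
    ∑ x : ZMod p, (ZMod.stdAddChar (x * b) : ℂ) = if b = 0 then (p : ℂ) else 0 := by
  rw [AddChar.sum_mulShift b (ZMod.isPrimitive_stdAddChar p)]
  split_ifs <;> simp [ZMod.card]

theorem sum_cc (b : ZMod p) : ∑ x : ZMod p, cc (x * b) = if b = 0 then (p : ℝ) else 0 := by
  have := congrArg Complex.re (sum_chi b)
  rw [Complex.re_sum] at this
  unfold cc
  rw [this]; split_ifs <;> simp

theorem chi_sum {ι : Type} [Fintype ι] [DecidableEq ι] (g : ι → ZMod p) :
    (ZMod.stdAddChar (∑ i, g i) : ℂ) = ∏ i, (ZMod.stdAddChar (g i) : ℂ) :=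
  by
  classical
  have : ∀ s : Finset ι, (ZMod.stdAddChar (∑ i ∈ s, g i) : ℂ)
      = ∏ i ∈ s, (ZMod.stdAddChar (g i) : ℂ) := by
    intro s
    induction s using Finset.induction_on with
    | empty => simp
    | insert a s ha ih => rw [Finset.sum_insert ha, Finset.prod_insert ha, AddChar.map_add_eq_mul, ih]
  exact this _

theorem ff_fourier_z {ι : Type} [Fintype ι] [DecidableEq ι] (μ : ι → ℝ) (w : ι → ZMod p) :
    (∑ Y : ι → SignType, if ∑ i, (((Y i : SignType) : ℤ) : ZMod p) * w i = 0 then WW μ Y else 0)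
      = (1 / (p : ℝ)) * ∑ ξ : ZMod p, ∏ i, (1 - μ i * (1 - cc (ξ * w i))) := by
  classical
  have hp : (p : ℂ) ≠ 0 := by exact_mod_cast NeZero.ne p
  apply Complex.ofReal_injective
  have h1 : ∀ ξ : ZMod p, ((∏ i, (1 - μ i * (1 - cc (ξ * w i))) : ℝ) : ℂ)
      = ∑ Y : ι → SignType, (WW μ Y : ℂ) *
          ZMod.stdAddChar (ξ * ∑ i, (((Y i : SignType) : ℤ) : ZMod p) * w i) := by
    intro ξ
    have : ∀ i, ((1 - μ i * (1 - cc (ξ * w i)) : ℝ) : ℂ)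
        = ∑ s : SignType, (wt (μ i) s : ℂ) * ZMod.stdAddChar (ξ * (((s : ℤ) : ZMod p) * w i)) := by
      intro i
      rw [sum_signType]
      have e := chi_add_chi_neg (ξ * w i)
      have : (ZMod.stdAddChar (ξ * w i) : ℂ) = 2 * (cc (ξ * w i) : ℂ) - ZMod.stdAddChar (-(ξ * w i)) := by
        rw [← e]; ring
      simp [wt, this]
      ring
    rw [Complex.ofReal_prod]
    simp_rw [this]
    rw [Finset.prod_univ_sum]
    simp only [Fintype.piFinset_univ]
    refine Finset.sum_congr rfl fun Y _ => ?_
    rw [Finset.prod_mul_distrib, Finset.mul_sum, chi_sum, WW]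
    push_cast; rfl
  rw [Complex.ofReal_mul, Complex.ofReal_sum, Complex.ofReal_sum]
  simp_rw [h1]
  rw [Finset.sum_comm]
  simp_rw [← Finset.mul_sum, sum_chi]
  rw [Finset.mul_sum]
  refine Finset.sum_congr rfl fun Y _ => ?_
  split_ifs
  · push_cast; field_simp
  · simp

theorem prob_eq_sum {Ω : Type*} [Fintype Ω] (E : Ω → Prop) [DecidablePred E] :
    prob E = (1 / (Fintype.card Ω : ℝ)) * ∑ x, if E x then (1 : ℝ) else 0 := by
  unfold prob
  rw [Finset.sum_boole]
  rw [div_eq_mul_inv, mul_comm, one_div]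
  congr!

theorem zprob_le {ι : Type} [Fintype ι] [DecidableEq ι] [Fact p.Prime] (h3 : 3 ≤ p)
    (w : ι → ZMod p) (P : Finset ι) (b : ZMod p) :
    prob (fun x : ι → Bool => ∑ i, (if i ∈ P then signb (ZMod p) (x i) * w i else 0) = b)
      ≤ (1 / (p : ℝ)) * ∑ ξ : ZMod p, ∏ i, (1 - (if i ∈ P then 1 / 4 else 0) * (1 - cc (ξ * w i))) := by
  have hp : (p : ℂ) ≠ 0 := by exact_mod_cast NeZero.ne p
  rw [prob_eq_sum]
  have h1 : ∀ x : ι → Bool, ((if ∑ i, (if i ∈ P then signb (ZMod p) (x i) * w i else 0) = b then (1:ℝ) else 0 : ℝ) : ℂ)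
      = (1 / (p : ℂ)) * ∑ ξ : ZMod p, (ZMod.stdAddChar (ξ * (-b)) : ℂ) *
        ∏ i, (ZMod.stdAddChar (ξ * (if i ∈ P then signb (ZMod p) (x i) * w i else 0)) : ℂ) := by
    intro x
    simp_rw [← chi_sum, ← Finset.mul_sum, ← AddChar.map_add_eq_mul, ← mul_add]
    rw [sum_chi]
    have : (-b + ∑ i, (if i ∈ P then signb (ZMod p) (x i) * w i else 0) = 0) ↔
       ∑ i, (if i ∈ P then signb (ZMod p) (x i) * w i else 0) = b := by
      constructor <;> intro h
      · linear_combination h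
      · rw [h]; ring
    simp only [this]
    split_ifs
    · push_cast; field_simp
    · simp
  have h2 : ∀ ξ : ZMod p, ∑ x : ι → Bool, ∏ i, (ZMod.stdAddChar (ξ * (if i ∈ P then signb (ZMod p) (x i) * w i else 0)) : ℂ)
      = (Fintype.card (ι → Bool) : ℂ) * ((∏ i, (if i ∈ P then cc (ξ * w i) else 1) : ℝ) : ℂ) := by
    intro ξ
    have := Finset.prod_univ_sum (fun _ : ι => (Finset.univ : Finset Bool))
      (fun i b => (ZMod.stdAddChar (ξ * (if i ∈ P then signb (ZMod p) b * w i else 0)) : ℂ))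
    rw [Fintype.piFinset_univ] at this
    rw [← this]
    have hh : ∀ i, ∑ b : Bool, (ZMod.stdAddChar (ξ * (if i ∈ P then signb (ZMod p) b * w i else 0)) : ℂ)
        = 2 * ((if i ∈ P then cc (ξ * w i) else 1 : ℝ) : ℂ) := by
      intro i
      rw [Fintype.sum_bool]
      by_cases hi : i ∈ P
      · simp only [hi, if_true, signb]
        simp only [one_mul, Bool.false_eq_true, if_false, neg_mul, mul_neg]
        exact chi_add_chi_neg _
      · simp [hi]; norm_num
    simp_rw [hh]
    rw [Finset.prod_mul_distrib, Complex.ofReal_prod]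
    congr 1
    simp
  have h3' : ((1 / (Fintype.card (ι → Bool) : ℝ) * ∑ x : ι → Bool, (if ∑ i, (if i ∈ P then signb (ZMod p) (x i) * w i else 0) = b then (1:ℝ) else 0) : ℝ) : ℂ)
      = (1 / (p : ℂ)) * ∑ ξ : ZMod p, (ZMod.stdAddChar (ξ * (-b)) : ℂ) * ((∏ i, (if i ∈ P then cc (ξ * w i) else 1) : ℝ) : ℂ) := by
    rw [Complex.ofReal_mul, Complex.ofReal_sum]
    simp_rw [h1]
    rw [← Finset.mul_sum, Finset.sum_comm]
    simp_rw [← Finset.mul_sum, h2]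
    have hc : (Fintype.card (ι → Bool) : ℂ) ≠ 0 := by
      simp
    rw [Finset.mul_sum, Finset.mul_sum, Finset.mul_sum]
    refine Finset.sum_congr rfl fun ξ _ => ?_
    push_cast
    field_simp
  have h4 := congrArg norm h3'
  rw [Complex.norm_real] at h4
  refine le_trans (le_abs_self _) ?_
  rw [← Real.norm_eq_abs, h4, norm_mul]
  have : ‖(1 / (p : ℂ))‖ = 1 / (p : ℝ) := by simp
  rw [this]
  refine mul_le_mul_of_nonneg_left ?_ (by positivity)
  refine le_trans (norm_sum_le _ _) ?_
  have h2ne : (2 : ZMod p) ≠ 0 := by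
    intro h
    have : ((2 : ℕ) : ZMod p) = 0 := by exact_mod_cast h
    rw [ZMod.natCast_eq_zero_iff] at this
    have := Nat.le_of_dvd (by norm_num) this
    omega
  have hsc := Equiv.sum_comp (Equiv.mulLeft₀ (2 : ZMod p) h2ne)
    (fun ξ => ∏ i, (1 - (if i ∈ P then (1 / 4 : ℝ) else 0) * (1 - cc (ξ * w i))))
  rw [← hsc]
  refine Finset.sum_le_sum fun ξ _ => ?_
  rw [norm_mul, norm_chi, one_mul, Complex.norm_real, Real.norm_eq_abs, Finset.abs_prod]
  refine Finset.prod_le_prod (fun _ _ => abs_nonneg _) fun i _ => ?_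
  simp only [Equiv.mulLeft₀_apply]
  split_ifs
  · rw [mul_assoc]; exact abs_cc_le _
  · simp

end FT

theorem exists_model {ι : Type} [Fintype ι] [DecidableEq ι] (v : ι → ℝ) (P0 : ℕ) :
    ∃ p : ℕ, ∃ _ : Fact p.Prime, P0 ≤ p ∧ ∃ w : ι → ZMod p, (∀ i, w i = 0 ↔ v i = 0) ∧
      (∀ μ : ι → ℝ, ff μ v = (1 / (p : ℝ)) * ∑ ξ : ZMod p, ∏ i, (1 - μ i * (1 - cc (ξ * w i)))) ∧
      (∀ (P : Finset ι) (a : ℝ),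
        prob (fun x : ι → Bool => ∑ i, (if i ∈ P then signb ℝ (x i) * v i else 0) = a)
          ≤ (1 / (p : ℝ)) * ∑ ξ : ZMod p, ∏ i, (1 - (if i ∈ P then 1 / 4 else 0) * (1 - cc (ξ * w i)))) := by
  classical
  obtain ⟨p, hp, hP0, h3, w, hw⟩ := exists_zmod_model v P0
  have : Fact p.Prime := ⟨hp⟩
  refine ⟨p, ⟨hp⟩, hP0, w, ?_, ?_, ?_⟩
  · intro i
    have := hw (fun j => if j = i then 1 else 0) (fun j => by
      split_ifs <;> simp)
    simpa using this.symm
  · intro μ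
    rw [← ff_fourier_z]
    unfold ff
    refine Finset.sum_congr rfl fun Y _ => ?_
    have := hw (fun j => ((Y j : SignType) : ℤ)) (fun j => by
      generalize Y j = s; revert s; decide)
    have e : ∀ i, (((Y i : SignType) : ℤ) : ℝ) = ((Y i : SignType) : ℝ) := by
      intro i; generalize Y i = s; cases s <;> simp
    simp only [e] at this
    simp only [this]
  · intro P a
    by_cases hE : ∃ x : ι → Bool, ∑ i, (if i ∈ P then signb ℝ (x i) * v i else 0) = a
    · obtain ⟨x0, hx0⟩ := hE
      refine le_trans (le_of_eq ?_) (zprob_le h3 w P (∑ i, (if i ∈ P then signb (ZMod p) (x0 i) * w i else 0)))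
      congr 1
      funext x
      rw [eq_iff_iff, ← hx0]
      have := hw (fun j => if j ∈ P then signb ℤ (x j) - signb ℤ (x0 j) else 0) (fun j => by
        split_ifs
        · cases x j <;> cases x0 j <;> simp [signb]
        · simp)
      rw [← sub_eq_zero, ← Finset.sum_sub_distrib, ← sub_eq_zero (b := ∑ i, (if i ∈ P then signb (ZMod p) (x0 i) * w i else 0)), ← Finset.sum_sub_distrib]
      convert this using 3
      · split_ifs
        · rename_i i _ _
          cases x i <;> cases x0 i <;> simp [signb] <;> ring
        · simp
      · split_ifs
        · rename_i i _ _
          cases x i <;> cases x0 i <;> simp [signb] <;> ring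
        · simp
    · have : prob (fun x : ι → Bool => ∑ i, (if i ∈ P then signb ℝ (x i) * v i else 0) = a) = 0 := by
        unfold prob
        rw [Finset.filter_false_of_mem]
        · simp
        · intro x _ h; exact hE ⟨x, h⟩
      rw [this]
      refine mul_nonneg (by positivity) (Finset.sum_nonneg fun ξ _ => Finset.prod_nonneg fun i _ => ?_)
      have := neg_one_le_cc (ξ * w i)
      have := cc_le_one (ξ * w i)
      split_ifs <;> nlinarith

end Piece1

section Piece2

theorem wt_nonneg {μ : ℝ} (h0 : 0 ≤ μ) (h1 : μ ≤ 1) (s : SignType) : 0 ≤ wt μ s := by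
  unfold wt; split_ifs <;> linarith

theorem sum_wt (μ : ℝ) : ∑ s, wt μ s = 1 := by
  rw [sum_signType]; simp [wt]

section
variable {ι : Type} [Fintype ι] [DecidableEq ι]

theorem WW_nonneg {μ : ι → ℝ} (h : ∀ i, 0 ≤ μ i ∧ μ i ≤ 1) (Y : ι → SignType) : 0 ≤ WW μ Y :=
  Finset.prod_nonneg fun i _ => wt_nonneg (h i).1 (h i).2 _

theorem sum_WW (μ : ι → ℝ) : ∑ Y : ι → SignType, WW μ Y = 1 := by
  have := Finset.prod_univ_sum (fun _ : ι => (Finset.univ : Finset SignType)) (fun i s => wt (μ i) s)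
  rw [Fintype.piFinset_univ] at this
  unfold WW
  rw [← this]
  simp [sum_wt]

theorem ff_nonneg {μ : ι → ℝ} (h : ∀ i, 0 ≤ μ i ∧ μ i ≤ 1) (v : ι → ℝ) : 0 ≤ ff μ v := by
  unfold ff
  refine Finset.sum_nonneg fun Y _ => ?_
  split_ifs
  · exact WW_nonneg h Y
  · exact le_rfl

theorem ff_le_one {μ : ι → ℝ} (h : ∀ i, 0 ≤ μ i ∧ μ i ≤ 1) (v : ι → ℝ) : ff μ v ≤ 1 := by
  rw [← sum_WW μ]
  unfold ff
  refine Finset.sum_le_sum fun Y _ => ?_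
  split_ifs
  · exact le_rfl
  · exact WW_nonneg h Y

theorem le_ff {μ : ι → ℝ} (h : ∀ i, 0 ≤ μ i ∧ μ i ≤ 1) (v : ι → ℝ) : ∏ i, (1 - μ i) ≤ ff μ v := by
  unfold ff
  refine le_trans (le_of_eq ?_) (Finset.single_le_sum (f := fun Y : ι → SignType =>
    if ∑ i, ((Y i : SignType) : ℝ) * v i = 0 then WW μ Y else 0) (fun Y _ => ?_)
    (Finset.mem_univ (fun _ => 0)))
  · simp [WW, wt]
  · split_ifs
    · exact WW_nonneg h Y
    · exact le_rfl

theorem ff_anti {μ ν : ι → ℝ} (h : ∀ i, 0 ≤ ν i ∧ ν i ≤ μ i ∧ μ i ≤ 1 / 2) (v : ι → ℝ) :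
    ff μ v ≤ ff ν v := by
  obtain ⟨p, _, _, w, _, hff, _⟩ := exists_model v 0
  rw [hff, hff]
  refine mul_le_mul_of_nonneg_left ?_ (by positivity)
  refine Finset.sum_le_sum fun ξ _ => Finset.prod_le_prod (fun i _ => ?_) fun i _ => ?_
  all_goals
    have h1 := neg_one_le_cc (ξ * w i)
    have h2 := cc_le_one (ξ * w i)
    obtain ⟨a, b, c⟩ := h i
    nlinarith

theorem prob_le_ff (v : ι → ℝ) (P : Finset ι) (a : ℝ) :
    prob (fun x : ι → Bool => ∑ i, (if i ∈ P then signb ℝ (x i) * v i else 0) = a)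
      ≤ ff (fun i => if i ∈ P then 1 / 4 else 0) v := by
  obtain ⟨p, _, _, w, _, hff, h⟩ := exists_model v 0
  rw [hff]; exact h P a

theorem sum_ff_subset (v : ι → ℝ) :
    ∑ J : Finset ι, ff (fun i => if i ∈ J then 1 / 4 else 0) v
      = 2 ^ (Fintype.card ι) * ff (fun _ => 1 / 8) v := by
  obtain ⟨p, _, _, w, _, hff, h⟩ := exists_model v 0
  simp_rw [hff]
  rw [← Finset.mul_sum, Finset.sum_comm, mul_left_comm]
  congr 1
  rw [Finset.mul_sum]
  refine Finset.sum_congr rfl fun ξ _ => ?_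
  have e : ∀ J : Finset ι, ∏ i, (1 - (if i ∈ J then (1 / 4 : ℝ) else 0) * (1 - cc (ξ * w i)))
      = (∏ i ∈ J, (1 - 1 / 4 * (1 - cc (ξ * w i)))) * ∏ i ∈ univ \ J, (1 : ℝ) := by
    intro J
    rw [Finset.prod_const_one, mul_one, ← Finset.prod_subset (Finset.subset_univ J)]
    · exact Finset.prod_congr rfl fun i hi => by simp [hi]
    · intro i _ hi; simp [hi]
  simp_rw [e]
  rw [← Finset.powerset_univ, ← Finset.prod_add]
  rw [← Finset.card_univ, ← Finset.prod_const, ← Finset.prod_mul_distrib]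
  exact Finset.prod_congr rfl fun i _ => by ring

end

theorem exists_half {n : ℕ} (v : Fin n → ℝ) : ∃ J : Finset (Fin n), J.card = n / 2 ∧
    ff (fun i => if i ∈ J then 1 / 4 else 0) v ≤ 2 * ff (fun _ => 1 / 8) v := by
  have hnn : ∀ J : Finset (Fin n), 0 ≤ ff (fun i => if i ∈ J then 1 / 4 else 0) v := fun J =>
    ff_nonneg (fun i => by split_ifs <;> norm_num) v
  have h1 : ∃ J : Finset (Fin n), ff (fun i => if i ∈ J then 1 / 4 else 0) v
      + ff (fun i => if i ∈ Jᶜ then 1 / 4 else 0) v ≤ 2 * ff (fun _ => 1 / 8) v := by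
    by_contra hcon
    push Not at hcon
    have := Finset.sum_lt_sum_of_nonempty (s := (univ : Finset (Finset (Fin n)))) ⟨∅, mem_univ _⟩
      (fun J _ => hcon J)
    rw [Finset.sum_add_distrib] at this
    have hc := Equiv.sum_comp (⟨compl, compl, compl_compl, compl_compl⟩ : Equiv (Finset (Fin n)) (Finset (Fin n)))
      (fun J : Finset (Fin n) => ff (fun i => if i ∈ J then 1 / 4 else 0) v)
    simp only [Equiv.coe_fn_mk] at hc
    rw [hc, sum_ff_subset] at this
    simp at this
    linarith
  obtain ⟨J, hJ⟩ := h1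
  have h2 : ∃ J : Finset (Fin n), J.card ≤ n / 2 ∧
    ff (fun i => if i ∈ J then 1 / 4 else 0) v ≤ 2 * ff (fun _ => 1 / 8) v := by
    have hc := Finset.card_add_card_compl J
    rw [Fintype.card_fin] at hc
    by_cases h : J.card ≤ n / 2
    · exact ⟨J, h, by linarith [hnn Jᶜ]⟩
    · exact ⟨Jᶜ, by omega, by linarith [hnn J]⟩
  obtain ⟨J, hJc, hJ⟩ := h2
  obtain ⟨J', hs, _, hc⟩ := Finset.exists_subsuperset_card_eq (Finset.subset_univ J) hJc
    (by simp; omega)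
  refine ⟨J', hc, le_trans (ff_anti (fun i => ?_) v) hJ⟩
  by_cases h : i ∈ J
  · simp [h, hs h]; norm_num
  · simp only [h, if_false]; split_ifs <;> norm_num


theorem cc_add_le {p : ℕ} [NeZero p] (x y : ZMod p) (k : ℝ) (hk : 0 < k) :
    1 - cc (x + y) ≤ (1 + 1 / k) * (1 - cc x) + (1 + k) * (1 - cc y) := by
  have hx : (ZMod.stdAddChar x : ℂ).re ^ 2 + (ZMod.stdAddChar x : ℂ).im ^ 2 = 1 := by
    have := Complex.normSq_eq_norm_sq (ZMod.stdAddChar x)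
    rw [norm_chi, Complex.normSq_apply] at this; linarith
  have hy : (ZMod.stdAddChar y : ℂ).re ^ 2 + (ZMod.stdAddChar y : ℂ).im ^ 2 = 1 := by
    have := Complex.normSq_eq_norm_sq (ZMod.stdAddChar y)
    rw [norm_chi, Complex.normSq_apply] at this; linarith
  unfold cc
  rw [AddChar.map_add_eq_mul, Complex.mul_re]
  generalize (ZMod.stdAddChar x : ℂ).re = a at *
  generalize (ZMod.stdAddChar x : ℂ).im = b at *
  generalize (ZMod.stdAddChar y : ℂ).re = c at *
  generalize (ZMod.stdAddChar y : ℂ).im = d at *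
  have key : k * (2 * ((1 + 1 / k) * (1 - a) + (1 + k) * (1 - c)) - 2 * (1 - (a * c - b * d)))
      = ((1 - a) - k * (a * (1 - c) + b * d)) ^ 2 + (-b - k * (b * (1 - c) - a * d)) ^ 2 := by
    have e : k * (1 / k) = 1 := by field_simp
    linear_combination (2 * (1 - a)) * e - (1 + k ^ 2 * ((1-c)^2 + d^2) + 2 * k * (1 - c)) * hx
      - k ^ 2 * hy
  have : 0 ≤ k * (2 * ((1 + 1 / k) * (1 - a) + (1 + k) * (1 - c)) - 2 * (1 - (a * c - b * d))) := by
    rw [key]; positivity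
  have := nonneg_of_mul_nonneg_right this hk
  linarith

section Gain
open scoped Pointwise
variable {n p : ℕ} [Fact p.Prime]

def psi (w : Fin n → ZMod p) (ξ : ZMod p) : ℝ := ∑ i, (1 - cc (ξ * w i))

theorem psi_nonneg (w : Fin n → ZMod p) (ξ : ZMod p) : 0 ≤ psi w ξ :=
  Finset.sum_nonneg fun i _ => by linarith [cc_le_one (ξ * w i)]

theorem psi_add_le (w : Fin n → ZMod p) (x y : ZMod p) (k : ℝ) (hk : 0 < k) :
    psi w (x + y) ≤ (1 + 1 / k) * psi w x + (1 + k) * psi w y := by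
  unfold psi
  rw [Finset.mul_sum, Finset.mul_sum, ← Finset.sum_add_distrib]
  refine Finset.sum_le_sum fun i _ => ?_
  rw [add_mul]; exact cc_add_le _ _ k hk

open Classical in
def BB (w : Fin n → ZMod p) (s : ℝ) : Finset (ZMod p) := univ.filter fun ξ => psi w ξ ≤ s

theorem mem_BB (w : Fin n → ZMod p) (s : ℝ) (ξ : ZMod p) : ξ ∈ BB w s ↔ psi w ξ ≤ s := by
  simp [BB]

theorem psi_zero (w : Fin n → ZMod p) : psi w 0 = 0 := by
  simp [psi, cc_zero]

theorem BB_card (w : Fin n → ZMod p) (s : ℝ) (hs : 0 ≤ s) (k : ℕ) :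
    min p ((k + 1) * ((BB w s).card - 1) + 1) ≤ (BB w ((k + 1 : ℝ) ^ 2 * s)).card := by
  classical
  have h0 : ∀ s : ℝ, 0 ≤ s → (BB w s).Nonempty := fun s hs => ⟨0, by rw [mem_BB, psi_zero]; exact hs⟩
  have hc : 1 ≤ (BB w s).card := Finset.card_pos.2 (h0 s hs)
  induction k with
  | zero =>
    refine le_trans (min_le_right _ _) ?_
    simp
    exact h0 s hs
  | succ k ih =>
    have hk : 0 ≤ (k + 1 : ℝ) ^ 2 * s := by positivity
    have cd := ZMod.cauchy_davenport (Fact.out : p.Prime) (h0 _ hk) (h0 s hs)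
    have hsub : BB w ((k + 1 : ℝ) ^ 2 * s) + BB w s ⊆ BB w (((k + 1 : ℕ) + 1 : ℝ) ^ 2 * s) := by
      intro z hz
      obtain ⟨x, hx, y, hy, rfl⟩ := Finset.mem_add.1 hz
      rw [mem_BB] at *
      have := psi_add_le w x y (k + 1) (by positivity)
      refine this.trans ?_
      have e1 : (1 + 1 / (k + 1 : ℝ)) * psi w x ≤ (1 + 1 / (k + 1 : ℝ)) * ((k + 1 : ℝ) ^ 2 * s) :=
        mul_le_mul_of_nonneg_left hx (by positivity)
      have e2 : (1 + (k + 1 : ℝ)) * psi w y ≤ (1 + (k + 1 : ℝ)) * s :=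
        mul_le_mul_of_nonneg_left hy (by positivity)
      refine (add_le_add e1 e2).trans (le_of_eq ?_)
      push_cast
      field_simp
      ring
    have := Finset.card_le_card hsub
    have hmul : (k + 1 + 1) * ((BB w s).card - 1) + 1 = ((k + 1) * ((BB w s).card - 1) + 1) + ((BB w s).card - 1) := by
      ring
    rw [hmul]
    refine le_trans ?_ (cd.trans this)
    omega

theorem sum_psi (w : Fin n → ZMod p) :
    ∑ ξ, psi w ξ = p * (univ.filter fun i => w i ≠ 0).card := by
  unfold psi
  rw [Finset.sum_comm]
  have : ∀ i, ∑ ξ : ZMod p, (1 - cc (ξ * w i)) = p * if w i ≠ 0 then (1:ℝ) else 0 := by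
    intro i
    rw [Finset.sum_sub_distrib, sum_cc]
    by_cases h : w i = 0 <;> simp [h]
  simp_rw [this]
  rw [← Finset.mul_sum, Finset.sum_boole]

end Gain

theorem exp_neg_two_mul_le {x : ℝ} (h0 : 0 ≤ x) (h1 : x ≤ 1 / 2) : Real.exp (-(2 * x)) ≤ 1 - x := by
  rw [Real.exp_neg]
  have := Real.add_one_le_exp (2 * x)
  rw [inv_le_comm₀ (Real.exp_pos _) (by linarith)]
  refine le_trans ?_ this
  rw [inv_le_iff_one_le_mul₀ (by linarith)]
  nlinarith

theorem gain {n j : ℕ} (hj : 1 ≤ j) (v : Fin n → ℝ)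
    (hsupp : 16 * j ^ 3 < (univ.filter fun i => v i ≠ 0).card) :
    ff (fun _ => 1 / 8) v ≤ 5 / j * ff (fun _ => 1 / (32 * (j : ℝ) ^ 3)) v := by
  classical
  obtain ⟨p, hpF, hpP, w, hw, hff, -⟩ := exists_model v (j * 2 ^ n)
  have hj' : (1 : ℝ) ≤ j := by exact_mod_cast hj
  have hj3 : (1 : ℝ) ≤ (j : ℝ) ^ 3 := one_le_pow₀ hj'
  have hp0 : (0 : ℝ) < p := by exact_mod_cast hpF.out.pos
  set μ : ℝ := 1 / (32 * (j : ℝ) ^ 3) with hμ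
  have hμ0 : 0 < μ := by positivity
  have hμ1 : μ ≤ 1 / 32 := by
    rw [hμ]; apply one_div_le_one_div_of_le <;> linarith
  have hμj : 2 * μ * (16 * (j : ℝ) ^ 3) = 1 := by rw [hμ]; field_simp; norm_num
  set S : ℝ := ∑ ξ : ZMod p, ∏ i, (1 - μ * (1 - cc (ξ * w i))) with hS
  have hSff : ff (fun _ => μ) v = (1 / (p : ℝ)) * S := hff _
  have ht : ∀ ξ i, 0 ≤ 1 - cc (ξ * w i) ∧ 1 - cc (ξ * w i) ≤ 2 := fun ξ i =>
    ⟨by linarith [cc_le_one (ξ * w i)], by linarith [neg_one_le_cc (ξ * w i)]⟩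
  have hlow : ∀ ξ, Real.exp (-(2 * μ * psi w ξ)) ≤ ∏ i, (1 - μ * (1 - cc (ξ * w i))) := by
    intro ξ
    have : -(2 * μ * psi w ξ) = ∑ i, -(2 * (μ * (1 - cc (ξ * w i)))) := by
      unfold psi; rw [Finset.sum_neg_distrib, Finset.mul_sum]
      congr 1; exact Finset.sum_congr rfl fun i _ => by ring
    rw [this, Real.exp_sum]
    refine Finset.prod_le_prod (fun _ _ => (Real.exp_pos _).le) fun i _ => ?_
    have := ht ξ i
    exact exp_neg_two_mul_le (by nlinarith) (by nlinarith)
  have hup : ∀ ξ, ∏ i, (1 - (1 / 8 : ℝ) * (1 - cc (ξ * w i))) ≤ Real.exp (-(psi w ξ / 8)) := by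
    intro ξ
    have : -(psi w ξ / 8) = ∑ i, -((1 / 8) * (1 - cc (ξ * w i))) := by
      unfold psi; rw [Finset.sum_neg_distrib, Finset.sum_div]
      congr 1; exact Finset.sum_congr rfl fun i _ => by ring
    rw [this, Real.exp_sum]
    refine Finset.prod_le_prod (fun i _ => ?_) fun i _ => Real.one_sub_le_exp_neg _
    have := ht ξ i
    linarith
  have hpos : ∀ ξ, 0 < ∏ i, (1 - μ * (1 - cc (ξ * w i))) := fun ξ =>
    lt_of_lt_of_le (Real.exp_pos _) (hlow ξ)
  have hSj : (j : ℝ) ≤ S := by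
    have h1 := le_ff (μ := fun _ : Fin n => μ) (fun _ => ⟨hμ0.le, by linarith⟩) v
    rw [hSff] at h1
    have h2 : ((1 : ℝ) / 2) ^ n ≤ ∏ i : Fin n, (1 - μ) := by
      rw [Finset.prod_const, Finset.card_univ, Fintype.card_fin]
      exact pow_le_pow_left₀ (by norm_num) (by linarith) _
    have h3 : (j : ℝ) * 2 ^ n ≤ p := by exact_mod_cast hpP
    have h4 : S = p * (1 / (p : ℝ) * S) := by field_simp
    rw [h4]
    calc (j : ℝ) = (j : ℝ) * 2 ^ n * (1 / 2) ^ n := by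
          rw [mul_assoc, ← mul_pow]; norm_num
      _ ≤ p * (1 / 2) ^ n := mul_le_mul_of_nonneg_right h3 (by positivity)
      _ ≤ p * (1 / (p : ℝ) * S) := mul_le_mul_of_nonneg_left (h2.trans h1) hp0.le
  obtain ⟨k, rfl⟩ : ∃ k, j = k + 1 := ⟨j - 1, by omega⟩
  set s : ℝ := 16 * ((k + 1 : ℕ) : ℝ) with hs
  have hs0 : 0 ≤ s := by positivity
  have hB := BB_card w s hs0 k
  have hks : ((k : ℝ) + 1) ^ 2 * s = 16 * (((k + 1 : ℕ) : ℝ)) ^ 3 := by rw [hs]; push_cast; ring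
  rw [hks] at hB
  have hBp : (BB w (16 * (((k + 1 : ℕ) : ℝ)) ^ 3)).card < p := by
    by_contra hcon
    have : BB w (16 * (((k + 1 : ℕ) : ℝ)) ^ 3) = univ := by
      apply Finset.eq_univ_of_card
      rw [ZMod.card]
      refine le_antisymm ?_ (not_lt.1 hcon)
      have := Finset.card_le_univ (BB w (16 * (((k + 1 : ℕ) : ℝ)) ^ 3))
      rwa [ZMod.card] at this
    have hall : ∀ ξ ∈ (univ : Finset (ZMod p)), psi w ξ ≤ 16 * (((k + 1 : ℕ) : ℝ)) ^ 3 := by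
      intro ξ hξ; rw [← this] at hξ; exact (mem_BB _ _ _).1 hξ
    have hle := Finset.sum_le_sum hall
    rw [sum_psi, Finset.sum_const, Finset.card_univ, ZMod.card, nsmul_eq_mul] at hle
    have := le_of_mul_le_mul_left hle hp0
    have hcard : (univ.filter fun i => w i ≠ 0).card = (univ.filter fun i => v i ≠ 0).card := by
      congr 1; ext i; simp [hw]
    rw [hcard] at this
    have : (univ.filter fun i => v i ≠ 0).card ≤ 16 * (k + 1) ^ 3 := by exact_mod_cast this
    omega
  have hB' : (k + 1) * ((BB w s).card - 1) + 1 ≤ (BB w (16 * (((k + 1 : ℕ) : ℝ)) ^ 3)).card := by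
    omega
  have hBS : ((BB w (16 * (((k + 1 : ℕ) : ℝ)) ^ 3)).card : ℝ) ≤ Real.exp 1 * S := by
    have : ((BB w (16 * (((k + 1 : ℕ) : ℝ)) ^ 3)).card : ℝ) * Real.exp (-1) ≤ S := by
      rw [hS, ← nsmul_eq_mul, ← Finset.sum_const]
      refine le_trans (Finset.sum_le_sum fun ξ hξ => ?_)
        (Finset.sum_le_univ_sum_of_nonneg fun ξ => (hpos ξ).le)
      refine le_trans (Real.exp_le_exp.2 ?_) (hlow ξ)
      rw [mem_BB] at hξ
      have := mul_le_mul_of_nonneg_left hξ (by positivity : 0 ≤ 2 * μ)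
      rw [hμj] at this
      linarith
    rw [Real.exp_neg] at this
    have he := Real.exp_pos 1
    calc _ = Real.exp 1 * (((BB w (16 * (((k + 1 : ℕ) : ℝ)) ^ 3)).card : ℝ) * (Real.exp 1)⁻¹) := by
            field_simp
      _ ≤ _ := mul_le_mul_of_nonneg_left this he.le
  have hjpos : (0 : ℝ) < ((k + 1 : ℕ) : ℝ) := by linarith
  have hA : ((BB w s).card : ℝ) ≤ (Real.exp 1 * S + S) / ((k + 1 : ℕ) : ℝ) := by
    rw [le_div_iff₀ hjpos]
    have : (k + 1) * (BB w s).card ≤ (BB w (16 * (((k + 1 : ℕ) : ℝ)) ^ 3)).card + (k + 1) := by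
      rcases Nat.eq_zero_or_pos (BB w s).card with h | h
      · rw [h]; omega
      · obtain ⟨c, hc⟩ : ∃ c, (BB w s).card = c + 1 := ⟨(BB w s).card - 1, by omega⟩
        rw [hc] at hB' ⊢
        simp only [Nat.add_sub_cancel] at hB'
        nlinarith
    have : (((k + 1 : ℕ) : ℝ)) * ((BB w s).card : ℝ) ≤ ((BB w (16 * (((k + 1 : ℕ) : ℝ)) ^ 3)).card : ℝ) + ((k + 1 : ℕ) : ℝ) := by
      exact_mod_cast this
    linarith
  have hmain : ∑ ξ : ZMod p, ∏ i, (1 - (1 / 8 : ℝ) * (1 - cc (ξ * w i))) ≤ ((BB w s).card : ℝ) + S / ((k + 1 : ℕ) : ℝ) := by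
    have : ((BB w s).card : ℝ) = ∑ ξ : ZMod p, if ξ ∈ BB w s then (1:ℝ) else 0 := by
      simp
    rw [this, hS, Finset.sum_div, ← Finset.sum_add_distrib]
    refine Finset.sum_le_sum fun ξ _ => ?_
    refine (hup ξ).trans ?_
    have hq : 0 ≤ (∏ i, (1 - μ * (1 - cc (ξ * w i)))) / ((k + 1 : ℕ) : ℝ) :=
      div_nonneg (hpos ξ).le hjpos.le
    split_ifs with h
    · have : Real.exp (-(psi w ξ / 8)) ≤ 1 := by
        rw [Real.exp_le_one_iff]; linarith [psi_nonneg w ξ]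
      linarith
    · rw [mem_BB, not_le] at h
      have e1 : -(psi w ξ / 8) = -(psi w ξ / 16) + -(psi w ξ / 16) := by ring
      rw [e1, Real.exp_add, zero_add, div_eq_inv_mul (∏ i, (1 - μ * (1 - cc (ξ * w i))))]
      refine mul_le_mul ?_ ?_ (Real.exp_pos _).le (by positivity)
      · rw [Real.exp_neg]
        apply inv_anti₀ hjpos
        have := Real.add_one_le_exp (psi w ξ / 16)
        rw [hs] at h
        linarith
      · refine le_trans (Real.exp_le_exp.2 ?_) (hlow ξ)
        have := psi_nonneg w ξ
        nlinarith
  rw [hff, hSff]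
  have he : Real.exp 1 ≤ 3 := by linarith [Real.exp_one_lt_d9]
  have hS0 : 0 < S := lt_of_lt_of_le hjpos hSj
  rw [mul_left_comm]
  refine mul_le_mul_of_nonneg_left ?_ (by positivity)
  refine hmain.trans ?_
  calc ((BB w s).card : ℝ) + S / ((k + 1 : ℕ) : ℝ) ≤ (Real.exp 1 * S + S) / ((k + 1 : ℕ) : ℝ) + S / ((k + 1 : ℕ) : ℝ) := by linarith
    _ = (Real.exp 1 * S + S + S) / ((k + 1 : ℕ) : ℝ) := by ring
    _ ≤ (5 * S) / ((k + 1 : ℕ) : ℝ) := by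
        apply div_le_div_of_nonneg_right _ hjpos.le
        nlinarith
    _ = _ := by ring

end Piece2

section Piece3

theorem sum_fin_cons {n : ℕ} {α M : Type*} [Fintype α] [AddCommMonoid M]
    (f : (Fin (n + 1) → α) → M) :
    ∑ Y : Fin (n + 1) → α, f Y = ∑ y : α, ∑ Y' : Fin n → α, f (Fin.cons y Y') := by
  rw [← Fintype.sum_prod_type']
  exact (Fintype.sum_equiv (Fin.consEquiv (fun _ : Fin (n + 1) => α)) _ _ (fun x => rfl)).symm

theorem sum_fin_snoc {n : ℕ} {α M : Type*} [Fintype α] [AddCommMonoid M]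
    (f : (Fin (n + 1) → α) → M) :
    ∑ Y : Fin (n + 1) → α, f Y = ∑ y : α, ∑ Y' : Fin n → α, f (Fin.snoc Y' y) := by
  rw [← Fintype.sum_prod_type']
  exact (Fintype.sum_equiv (Fin.snocEquiv (fun _ : Fin (n + 1) => α)) _ _ (fun x => rfl)).symm

theorem finrank_le_ker_add_one {T : Type} [AddCommGroup T] [Module ℝ T] [FiniteDimensional ℝ T]
    (V : Submodule ℝ T) (l : T →ₗ[ℝ] ℝ) :
    Module.finrank ℝ V ≤ Module.finrank ℝ (V ⊓ LinearMap.ker l : Submodule ℝ T) + 1 := by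
  have h1 := LinearMap.finrank_range_add_finrank_ker (l.domRestrict V)
  have h2 : Module.finrank ℝ (LinearMap.range (l.domRestrict V)) ≤ 1 := by
    have := Submodule.finrank_le (LinearMap.range (l.domRestrict V))
    simpa using this
  have h3 : Module.finrank ℝ (LinearMap.ker (l.domRestrict V))
      = Module.finrank ℝ (V ⊓ LinearMap.ker l : Submodule ℝ T) := by
    have : (LinearMap.ker (l.domRestrict V)).map V.subtype = V ⊓ LinearMap.ker l := by
      ext x; simp [LinearMap.domRestrict_apply, and_comm]
    rw [← this]
    exact (LinearEquiv.finrank_eq (Submodule.equivMapOfInjective _ V.injective_subtype _))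
  omega

theorem finrank_ker_lt {T : Type} [AddCommGroup T] [Module ℝ T] [FiniteDimensional ℝ T]
    (V : Submodule ℝ T) (l : T →ₗ[ℝ] ℝ) (h : ∃ t ∈ V, l t ≠ 0) :
    Module.finrank ℝ (V ⊓ LinearMap.ker l : Submodule ℝ T) < Module.finrank ℝ V := by
  apply Submodule.finrank_lt_finrank_of_lt
  refine lt_of_le_of_ne inf_le_left fun he => ?_
  obtain ⟨t, ht, hl⟩ := h
  rw [← he] at ht
  exact hl ht.2

open Classical in
def PU {n : ℕ} (μ : Fin n → ℝ) (U : Submodule ℝ (Fin n → ℝ)) : ℝ :=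
  ∑ Y : Fin n → SignType, if ∀ u ∈ U, ∑ i, ((Y i : SignType) : ℝ) * u i = 0 then WW μ Y else 0

def cons0 (n : ℕ) : (Fin n → ℝ) →ₗ[ℝ] (Fin (n + 1) → ℝ) where
  toFun u := Fin.cons 0 u
  map_add' u v := by
    funext i; refine Fin.cases ?_ (fun i => ?_) i <;> simp
  map_smul' c u := by
    funext i; refine Fin.cases ?_ (fun i => ?_) i <;> simp

theorem signType_cast_inj (a b : SignType) (h : (a : ℝ) = (b : ℝ)) : a = b := by
  cases a <;> cases b <;> first | rfl | (exfalso; simp at h; try norm_num at h)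

theorem odlyzko : ∀ {n : ℕ} (μ α : Fin n → ℝ) (_ : ∀ i, 0 ≤ μ i ∧ μ i ≤ 1)
    (_ : ∀ i, 1 - μ i ≤ α i ∧ μ i / 2 ≤ α i) (U : Submodule ℝ (Fin n → ℝ)),
    ∃ B : Finset (Fin n), Module.finrank ℝ U ≤ B.card ∧ PU μ U ≤ ∏ b ∈ B, α b := by
  classical
  intro n
  induction n with
  | zero =>
    intro μ α hμ hα U
    refine ⟨∅, ?_, ?_⟩
    · have := Submodule.finrank_le U
      simpa using this
    · simp only [Finset.prod_empty]
      rw [← sum_WW μ]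
      refine Finset.sum_le_sum fun Y _ => ?_
      split_ifs
      · exact le_rfl
      · exact WW_nonneg hμ _
  | succ n ih =>
    intro μ α hμ hα U
    set U' := U.comap (cons0 n) with hU'
    obtain ⟨B, hB, hP⟩ := ih (fun i => μ i.succ) (fun i => α i.succ) (fun i => hμ _) (fun i => hα _) U'
    have hmap : U ⊓ LinearMap.ker (LinearMap.proj 0 : (Fin (n+1) → ℝ) →ₗ[ℝ] ℝ) ≤ U'.map (cons0 n) := by
      rintro x ⟨hx, hx0⟩
      have hx0 : x 0 = 0 := hx0
      have e : cons0 n (Fin.tail x) = x := by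
        change Fin.cons 0 (Fin.tail x) = x
        rw [← hx0]; exact Fin.cons_self_tail x
      exact ⟨Fin.tail x, by change cons0 n (Fin.tail x) ∈ U; rw [e]; exact hx, e⟩
    have hfr : Module.finrank ℝ (U ⊓ LinearMap.ker (LinearMap.proj 0 : (Fin (n+1) → ℝ) →ₗ[ℝ] ℝ) : Submodule ℝ _)
        ≤ Module.finrank ℝ U' :=
      (Submodule.finrank_mono hmap).trans (Submodule.finrank_map_le _ _)
    have hWW : ∀ y (Y' : Fin n → SignType), WW μ (Fin.cons y Y') = wt (μ 0) y * WW (fun i => μ i.succ) Y' := by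
      intro y Y'; unfold WW; rw [Fin.prod_univ_succ]; simp
    have hperp : ∀ y (Y' : Fin n → SignType),
        (∀ u ∈ U, ∑ i, (((Fin.cons y Y' : Fin (n+1) → SignType) i : SignType) : ℝ) * u i = 0) →
        (∀ u ∈ U', ∑ i, ((Y' i : SignType) : ℝ) * u i = 0) := by
      intro y Y' h u hu
      have := h (cons0 n u) hu
      rw [Fin.sum_univ_succ] at this
      simpa [cons0] using this
    have hexp : PU μ U = ∑ Y' : Fin n → SignType, WW (fun i => μ i.succ) Y' * ∑ y,
        (if (∀ u ∈ U, ∑ i, (((Fin.cons y Y' : Fin (n+1) → SignType) i : SignType) : ℝ) * u i = 0) then wt (μ 0) y else 0) := by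
      unfold PU
      rw [sum_fin_cons, Finset.sum_comm]
      refine Finset.sum_congr rfl fun Y' _ => ?_
      rw [Finset.mul_sum]
      refine Finset.sum_congr rfl fun y _ => ?_
      rw [hWW]; split_ifs <;> ring
    have hW0 : ∀ Y', 0 ≤ WW (fun i => μ (Fin.succ i)) Y' := fun Y' => WW_nonneg (fun i => hμ _) Y'
    have key : ∀ c : ℝ, (∀ Y' : Fin n → SignType, ∑ y,
        (if (∀ u ∈ U, ∑ i, (((Fin.cons y Y' : Fin (n+1) → SignType) i : SignType) : ℝ) * u i = 0) then wt (μ 0) y else 0) ≤ c) →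
        PU μ U ≤ c * PU (fun i => μ i.succ) U' := by
      intro c hc
      rw [hexp]
      unfold PU
      rw [Finset.mul_sum]
      refine Finset.sum_le_sum fun Y' _ => ?_
      by_cases h : ∀ u ∈ U', ∑ i, ((Y' i : SignType) : ℝ) * u i = 0
      · rw [if_pos h, mul_comm]
        exact mul_le_mul_of_nonneg_right (hc Y') (hW0 Y')
      · rw [if_neg h, mul_zero, Finset.sum_eq_zero, mul_zero]
        intro y _
        rw [if_neg]
        exact fun h' => h (hperp y Y' h')
    have hwt0 : ∀ y, 0 ≤ wt (μ 0) y := fun y => wt_nonneg (hμ 0).1 (hμ 0).2 y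
    by_cases hcase : ∃ u ∈ U, u 0 ≠ 0
    · obtain ⟨u, huU, hu0⟩ := hcase
      refine ⟨insert 0 (B.map (Fin.succEmb n)), ?_, ?_⟩
      · rw [Finset.card_insert_of_notMem, Finset.card_map]
        · have := finrank_le_ker_add_one U (LinearMap.proj 0 : (Fin (n+1) → ℝ) →ₗ[ℝ] ℝ)
          omega
        · simp [Fin.succ_ne_zero]
      · rw [Finset.prod_insert, Finset.prod_map]
        · have hα0 : 0 ≤ α 0 := by
            have := hα 0; have := hμ 0; linarith
          refine le_trans (key (α 0) ?_) (mul_le_mul_of_nonneg_left hP hα0)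
          intro Y'
          by_cases hex : ∃ y0, ∀ u ∈ U, ∑ i, (((Fin.cons y0 Y' : Fin (n+1) → SignType) i : SignType) : ℝ) * u i = 0
          · obtain ⟨y0, hy0⟩ := hex
            rw [Finset.sum_eq_single y0]
            · rw [if_pos hy0]; unfold wt; split_ifs
              · exact (hα 0).1
              · exact (hα 0).2
            · intro y _ hne
              rw [if_neg]
              intro h
              apply hne
              apply signType_cast_inj
              have e1 := hy0 u huU
              have e2 := h u huU
              rw [Fin.sum_univ_succ] at e1 e2
              simp only [Fin.cons_zero, Fin.cons_succ] at e1 e2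
              apply mul_right_cancel₀ hu0
              linarith
            · simp
          · rw [Finset.sum_eq_zero]
            · exact hα0
            · intro y _
              rw [if_neg]
              exact fun h => hex ⟨y, h⟩
        · simp [Fin.succ_ne_zero]
    · push Not at hcase
      refine ⟨B.map (Fin.succEmb n), ?_, ?_⟩
      · rw [Finset.card_map]
        refine le_trans ?_ (hfr.trans hB)
        apply Submodule.finrank_mono
        exact fun u hu => ⟨hu, hcase u hu⟩
      · rw [Finset.prod_map]
        refine le_trans (key 1 ?_) (by rw [one_mul]; exact hP)
        intro Y'
        rw [← sum_wt (μ 0)]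
        refine Finset.sum_le_sum fun y _ => ?_
        split_ifs
        · exact le_rfl
        · exact hwt0 y

theorem odlyzko_set {n : ℕ} (μ : Fin n → ℝ) (hμ : ∀ i, 0 ≤ μ i ∧ μ i ≤ 1) (P : Finset (Fin n))
    (a : ℝ) (ha : a ≤ 1) (hP : ∀ i ∈ P, 1 - μ i ≤ a ∧ μ i / 2 ≤ a) (U : Submodule ℝ (Fin n → ℝ))
    (e : ℕ) (he : e + n ≤ Module.finrank ℝ U + P.card) :
    PU μ U ≤ a ^ e := by
  classical
  by_cases hPe : P = ∅
  · subst hPe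
    have h1 := Submodule.finrank_le U
    simp at h1 he
    have : e = 0 := by omega
    subst this
    rw [pow_zero, ← sum_WW μ]
    refine Finset.sum_le_sum fun Y _ => ?_
    split_ifs
    · exact le_rfl
    · exact WW_nonneg hμ _
  have ha0 : 0 ≤ a := by
    obtain ⟨i, hi⟩ := Finset.nonempty_iff_ne_empty.2 hPe
    have := hP i hi; have := hμ i; linarith
  obtain ⟨B, hB, h⟩ := odlyzko μ (fun i => if i ∈ P then a else 1) hμ (fun i => by
    split_ifs with h
    · exact hP i h
    · constructor <;> linarith [(hμ i).1, (hμ i).2]) U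
  refine h.trans ?_
  rw [Finset.prod_ite, Finset.prod_const, Finset.prod_const_one, mul_one]
  refine pow_le_pow_of_le_one ha0 ha ?_
  have h1 : (B ∪ P).card + (B ∩ P).card = B.card + P.card := Finset.card_union_add_card_inter B P
  have h2 : (B ∪ P).card ≤ n := by simpa using Finset.card_le_univ (B ∪ P)
  have h3 : B.filter (fun i => i ∈ P) = B ∩ P := by ext; simp
  rw [h3]
  omega

end Piece3

section Piece4

def dotL {n : ℕ} (y : Fin n → ℝ) : (Fin n → ℝ) →ₗ[ℝ] ℝ where
  toFun u := ∑ i, y i * u i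
  map_add' u v := by simp [mul_add, Finset.sum_add_distrib]
  map_smul' c u := by
    simp only [Pi.smul_apply, smul_eq_mul, RingHom.id_apply, Finset.mul_sum]
    exact Finset.sum_congr rfl fun i _ => by ring

theorem dotL_apply {n : ℕ} (y u : Fin n → ℝ) : dotL y u = ∑ i, y i * u i := rfl

open Classical in
theorem greedy {n K : ℕ} {Ω : Type} (BS : Finset Ω) (hne : BS.Nonempty) (v : Ω → Fin n → ℝ)
    (μ : ℕ → Fin n → ℝ) (hμ : ∀ k i, 0 ≤ μ k i ∧ μ k i ≤ 1) (q : ℕ → Ω → ℝ)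
    (hq : ∀ k < K, ∀ ω ∈ BS, 0 < q k ω) (hK : K ≤ n)
    (h : ∀ k < K, ∀ U : Submodule ℝ (Fin n → ℝ), Module.finrank ℝ U = n - k →
      ∀ ω ∈ BS, v ω ∈ U → q k ω ≤ ff (μ k) (v ω) - PU (μ k) U) :
    ∀ k ≤ K, ∃ U : Submodule ℝ (Fin n → ℝ), Module.finrank ℝ U = n - k ∧
      (BS.card : ℝ) ≤ ∑ ω ∈ BS, if v ω ∈ U then ∏ i ∈ range k, (q i ω)⁻¹ else 0 := by
  intro k
  induction k with
  | zero =>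
    intro _
    refine ⟨⊤, by simp, ?_⟩
    simp
  | succ k ih =>
    intro hk
    obtain ⟨U, hU, hS⟩ := ih (by omega)
    have hcard : (0 : ℝ) < BS.card := by exact_mod_cast hne.card_pos
    let S : (Fin n → SignType) → ℝ := fun Y => ∑ ω ∈ BS,
      if v ω ∈ U ⊓ LinearMap.ker (dotL fun i => ((Y i : SignType) : ℝ)) then ∏ i ∈ range (k + 1), (q i ω)⁻¹ else 0
    let W1 : (Fin n → SignType) → ℝ := fun Y =>
      if ∀ u ∈ U, ∑ i, ((Y i : SignType) : ℝ) * u i = 0 then 0 else WW (μ k) Y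
    have hW1 : ∀ Y, 0 ≤ W1 Y := by
      intro Y; simp only [W1]; split_ifs
      · exact le_rfl
      · exact WW_nonneg (hμ k) Y
    have hR : ∀ ω ∈ BS, 0 < ∏ i ∈ range (k + 1), (q i ω)⁻¹ := by
      intro ω hω
      refine Finset.prod_pos fun i hi => inv_pos.2 (hq i ?_ ω hω)
      have := Finset.mem_range.1 hi; omega
    have hsum : (BS.card : ℝ) ≤ ∑ Y, W1 Y * S Y := by
      refine hS.trans ?_
      simp only [S, Finset.mul_sum]
      rw [Finset.sum_comm]
      refine Finset.sum_le_sum fun ω hω => ?_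
      by_cases hv : v ω ∈ U
      · rw [if_pos hv]
        have e : ∑ Y : Fin n → SignType, W1 Y * (if v ω ∈ U ⊓ LinearMap.ker (dotL fun i => ((Y i : SignType) : ℝ)) then ∏ i ∈ range (k + 1), (q i ω)⁻¹ else 0)
            = (ff (μ k) (v ω) - PU (μ k) U) * ∏ i ∈ range (k + 1), (q i ω)⁻¹ := by
          unfold ff PU
          rw [← Finset.sum_sub_distrib, Finset.sum_mul]
          refine Finset.sum_congr rfl fun Y _ => ?_
          simp only [W1, Submodule.mem_inf, hv, true_and, LinearMap.mem_ker, dotL_apply]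
          by_cases h1 : ∀ u ∈ U, ∑ i, ((Y i : SignType) : ℝ) * u i = 0
          · rw [if_pos h1, if_pos h1]; simp only [h1 _ hv, if_true]; ring
          · rw [if_neg h1, if_neg h1]
            split_ifs <;> ring
        rw [e]
        have hq' := h k (by omega) U hU ω hω hv
        have hp := hq k (by omega) ω hω
        calc ∏ i ∈ range k, (q i ω)⁻¹ = q k ω * ∏ i ∈ range (k + 1), (q i ω)⁻¹ := by
              rw [Finset.prod_range_succ]; field_simp
          _ ≤ _ := mul_le_mul_of_nonneg_right hq' (hR ω hω).le
      · rw [if_neg hv]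
        refine Finset.sum_nonneg fun Y _ => mul_nonneg (hW1 Y) ?_
        split_ifs
        · exact (hR ω hω).le
        · exact le_rfl
    have hW1s : ∑ Y, W1 Y ≤ 1 := by
      rw [← sum_WW (μ k)]
      refine Finset.sum_le_sum fun Y _ => ?_
      simp only [W1]; split_ifs
      · exact WW_nonneg (hμ k) Y
      · exact le_rfl
    have : ∃ Y, 0 < W1 Y ∧ (BS.card : ℝ) ≤ S Y := by
      by_contra hcon
      push Not at hcon
      have hle : ∀ Y ∈ (univ : Finset (Fin n → SignType)), W1 Y * S Y ≤ W1 Y * BS.card := by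
        intro Y _
        rcases (hW1 Y).lt_or_eq with hlt | heq
        · exact mul_le_mul_of_nonneg_left (hcon Y hlt).le (hW1 Y)
        · rw [← heq]; simp
      have hex : ∃ Y, 0 < W1 Y := by
        by_contra hno
        push Not at hno
        have : ∑ Y, W1 Y * S Y = 0 := Finset.sum_eq_zero fun Y _ => by
          rw [le_antisymm (hno Y) (hW1 Y), zero_mul]
        linarith
      obtain ⟨Y0, hY0⟩ := hex
      have := Finset.sum_lt_sum hle ⟨Y0, mem_univ _, mul_lt_mul_of_pos_left (hcon Y0 hY0) hY0⟩
      rw [← Finset.sum_mul] at this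
      nlinarith
    obtain ⟨Y, hY, hSY⟩ := this
    refine ⟨U ⊓ LinearMap.ker (dotL fun i => ((Y i : SignType) : ℝ)), ?_, hSY⟩
    have hnp : ∃ u ∈ U, dotL (fun i => ((Y i : SignType) : ℝ)) u ≠ 0 := by
      by_contra hcon
      push Not at hcon
      simp only [W1] at hY
      rw [if_pos] at hY
      · exact lt_irrefl _ hY
      · exact hcon
    have h1 := finrank_ker_lt U _ hnp
    have h2 := finrank_le_ker_add_one U (dotL fun i => ((Y i : SignType) : ℝ))
    omega

end Piece4

section Piece5

def glue {n : ℕ} (ω : Fin n → Fin n → Bool) (x : Fin (n + 1) → Bool) (y : Fin n → Bool) :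
    Fin (n + 1) → Fin (n + 1) → Bool :=
  Fin.snoc (α := fun _ => Fin (n + 1) → Bool)
    (fun i => Fin.snoc (α := fun _ => Bool) (ω i) (x i.castSucc))
    (Fin.snoc (α := fun _ => Bool) y (x (Fin.last n)))

def glueEquiv (n : ℕ) : ((Fin n → Fin n → Bool) × (Fin (n + 1) → Bool) × (Fin n → Bool)) ≃
    (Fin (n + 1) → Fin (n + 1) → Bool) where
  toFun z := glue z.1 z.2.1 z.2.2
  invFun ω := (fun i j => ω i.castSucc j.castSucc, fun i => ω i (Fin.last n),
    fun j => ω (Fin.last n) j.castSucc)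
  left_inv z := by
    obtain ⟨a, b, c⟩ := z
    refine Prod.ext ?_ (Prod.ext ?_ ?_)
    · funext i j; simp [glue]
    · funext i; refine Fin.lastCases ?_ (fun i => ?_) i <;> simp [glue]
    · funext j; simp [glue]
  right_inv ω := by
    funext i j
    refine Fin.lastCases ?_ (fun i => ?_) i <;> refine Fin.lastCases ?_ (fun j => ?_) j <;>
      simp [glue]

theorem sum_glue {n : ℕ} {M : Type*} [AddCommMonoid M] (f : (Fin (n + 1) → Fin (n + 1) → Bool) → M) :
    ∑ ω, f ω = ∑ x : Fin (n + 1) → Bool, ∑ y : Fin n → Bool, ∑ ω : Fin n → Fin n → Bool,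
      f (glue ω x y) := by
  rw [← Equiv.sum_comp (glueEquiv n), Fintype.sum_prod_type, Finset.sum_comm' (t' := univ) (s' := fun _ => univ) (by simp)]
  rw [Fintype.sum_prod_type]
  rfl

theorem symMat_glue_cc {n : ℕ} (ω : Fin n → Fin n → Bool) (x y) (i j : Fin n) :
    symMat ℝ (glue ω x y) i.castSucc j.castSucc = symMat ℝ ω i j := by
  simp only [symMat, Matrix.of_apply]
  rcases le_total i j with h | h
  · rw [min_eq_left h, max_eq_right h, min_eq_left (by simpa using h), max_eq_right (by simpa using h)]
    simp [glue]
  · rw [min_eq_right h, max_eq_left h, min_eq_right (by simpa using h), max_eq_left (by simpa using h)]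
    simp [glue]

theorem symMat_glue_cl {n : ℕ} (ω : Fin n → Fin n → Bool) (x y) (i : Fin n) :
    symMat ℝ (glue ω x y) i.castSucc (Fin.last n) = signb ℝ (x i.castSucc) := by
  simp only [symMat, Matrix.of_apply]
  rw [min_eq_left (Fin.le_last _), max_eq_right (Fin.le_last _)]
  simp [glue]

theorem symMat_glue_l {n : ℕ} (ω : Fin n → Fin n → Bool) (x y) (i : Fin (n + 1)) :
    symMat ℝ (glue ω x y) (Fin.last n) i = signb ℝ (x i) := by
  simp only [symMat, Matrix.of_apply]
  rw [min_eq_right (Fin.le_last _), max_eq_left (Fin.le_last _)]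
  refine Fin.lastCases ?_ (fun i => ?_) i <;> simp [glue]

theorem symMat_glue_mulVec {n : ℕ} (ω : Fin n → Fin n → Bool) (x y) (u w : Fin (n + 1) → ℝ) :
    symMat ℝ (glue ω x y) *ᵥ u = w ↔
      (symMat ℝ ω *ᵥ (fun i => u i.castSucc)
        = fun i => w i.castSucc - signb ℝ (x i.castSucc) * u (Fin.last n)) ∧
      ∑ i, signb ℝ (x i) * u i = w (Fin.last n) := by
  constructor
  · intro h
    constructor
    · funext i
      have := congrFun h i.castSucc
      simp only [Matrix.mulVec, dotProduct] at this ⊢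
      rw [Fin.sum_univ_castSucc] at this
      simp only [symMat_glue_cc, symMat_glue_cl] at this
      linarith
    · have := congrFun h (Fin.last n)
      simp only [Matrix.mulVec, dotProduct, symMat_glue_l] at this
      exact this
  · rintro ⟨h1, h2⟩
    funext i
    refine Fin.lastCases ?_ (fun i => ?_) i
    · simp only [Matrix.mulVec, dotProduct, symMat_glue_l]
      exact h2
    · have := congrFun h1 i
      simp only [Matrix.mulVec, dotProduct] at this ⊢
      rw [Fin.sum_univ_castSucc]
      simp only [symMat_glue_cc, symMat_glue_cl]
      linarith

theorem prob_init {n : ℕ} (E : (Fin n → Bool) → Prop) :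
    prob (fun x : Fin (n + 1) → Bool => E (fun i => x i.castSucc)) = prob E := by
  classical
  rw [prob_eq_sum, prob_eq_sum, sum_fin_snoc]
  simp
  field_simp
  ring

open Classical in
theorem Flem {T : Type} [AddCommGroup T] [Module ℝ T] [FiniteDimensional ℝ T] (Q : ℝ) (hQ : 1 ≤ Q) :
    ∀ (n : ℕ) (V : Submodule ℝ T) (u w : T →ₗ[ℝ] (Fin n → ℝ)) (good : Set T) (ρ : Fin n → T → ℝ)
      (_ : ∀ t ∈ good, ∀ k, 0 < ρ k t ∧ (ρ k t)⁻¹ ≤ Q)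
      (_ : ∀ t ∈ good, ∀ k a, prob (fun x : Fin n → Bool =>
        ∑ i, (if i ≤ k then signb ℝ (x i) * u t i else 0) = a) ≤ ρ k t)
      (sel : (Fin n → Fin n → Bool) → T),
      ∑ ω, (if sel ω ∈ good ∧ sel ω ∈ V ∧ symMat ℝ ω *ᵥ u (sel ω) = w (sel ω)
        then ∏ k, (ρ k (sel ω))⁻¹ else 0) ≤ 2 ^ (n * n) * (((n : ℝ) + 1) * Q) ^ Module.finrank ℝ V := by
  intro n
  induction n with
  | zero =>
    intro V u w good ρ hρ hpr sel
    simp only [Finset.univ_eq_empty, Finset.prod_empty]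
    have : (1 : ℝ) ≤ (((0 : ℕ) + 1 : ℝ) * Q) ^ Module.finrank ℝ V := by
      apply one_le_pow₀; simpa using hQ
    rw [Finset.sum_boole]
    refine le_trans ?_ (by simpa using this)
    have := Finset.card_le_univ (univ.filter fun ω : Fin 0 → Fin 0 → Bool => sel ω ∈ good ∧ sel ω ∈ V ∧ symMat ℝ ω *ᵥ u (sel ω) = w (sel ω))
    have h2 : Fintype.card (Fin 0 → Fin 0 → Bool) = 1 := by simp
    rw [h2] at this
    exact_mod_cast this
  | succ n ih =>
    intro V u w good ρ hρ hpr sel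
    rw [sum_glue]
    set d := Module.finrank ℝ V with hd
    let l : (Fin (n + 1) → Bool) → T →ₗ[ℝ] ℝ := fun x =>
      (dotL fun i => signb ℝ (x i)).comp u - (LinearMap.proj (Fin.last n)).comp w
    have hl : ∀ x t, l x t = ∑ i, signb ℝ (x i) * u t i - w t (Fin.last n) := fun x t => rfl
    let Z : (Fin (n + 1) → Bool) → Prop := fun x => ∀ t ∈ V, l x t = 0
    let u' : T →ₗ[ℝ] (Fin n → ℝ) := (LinearMap.funLeft ℝ ℝ Fin.castSucc).comp u
    let w' : (Fin (n + 1) → Bool) → T →ₗ[ℝ] (Fin n → ℝ) := fun x =>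
      (LinearMap.funLeft ℝ ℝ Fin.castSucc).comp w
        - LinearMap.pi fun i => signb ℝ (x i.castSucc) • (LinearMap.proj (Fin.last n)).comp u
    have hprob : ∀ t ∈ good, ∀ a, prob (fun x : Fin (n + 1) → Bool => ∑ i, signb ℝ (x i) * u t i = a)
        ≤ ρ (Fin.last n) t := by
      intro t ht a
      refine le_trans (le_of_eq ?_) (hpr t ht (Fin.last n) a)
      congr 1; funext x
      simp [Fin.le_last]
    have hIH : ∀ x y (V' : Submodule ℝ T),
      ∑ ω, (if sel (glue ω x y) ∈ good ∧ sel (glue ω x y) ∈ V' ∧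
          symMat ℝ ω *ᵥ u' (sel (glue ω x y)) = w' x (sel (glue ω x y))
        then ∏ k : Fin n, (ρ k.castSucc (sel (glue ω x y)))⁻¹ else 0)
        ≤ 2 ^ (n * n) * (((n : ℝ) + 1) * Q) ^ Module.finrank ℝ V' := by
      intro x y V'
      refine ih V' u' (w' x) good (fun k => ρ k.castSucc) (fun t ht k => hρ t ht _) ?_
        (fun ω => sel (glue ω x y))
      intro t ht k a
      refine le_trans (le_of_eq ?_) (hpr t ht k.castSucc a)
      rw [← prob_init]
      congr 1; funext z
      rw [Fin.sum_univ_castSucc]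
      have : ¬ Fin.last n ≤ k.castSucc := by
        rw [not_le]; exact Fin.castSucc_lt_last k
      simp [this, u', LinearMap.funLeft_apply]
    have hQ0 : 0 < Q := by linarith
    set A : ℝ := (((n : ℝ) + 1) * Q) ^ d with hA
    set A2 : ℝ := (((n + 1 : ℕ) + 1 : ℝ) * Q) ^ d with hA2
    have hAA : A ≤ A2 := by
      apply pow_le_pow_left₀ (by positivity)
      push_cast; nlinarith
    have hA0 : 0 < A := by positivity
    set c0 : ℝ := prob Z with hc0
    have hterm0 : ∀ (ω : Fin n → Fin n → Bool) x y (k : ℝ), 0 ≤ k → ∀ V' : Submodule ℝ T,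
        (sel (glue ω x y) ∈ good → sel (glue ω x y) ∈ V → l x (sel (glue ω x y)) = 0 →
          (ρ (Fin.last n) (sel (glue ω x y)))⁻¹ ≤ k ∧ sel (glue ω x y) ∈ V') →
        (if sel (glue ω x y) ∈ good ∧ sel (glue ω x y) ∈ V ∧ symMat ℝ (glue ω x y) *ᵥ u (sel (glue ω x y)) = w (sel (glue ω x y))
        then ∏ k, (ρ k (sel (glue ω x y)))⁻¹ else 0) ≤ k * (if sel (glue ω x y) ∈ good ∧ sel (glue ω x y) ∈ V' ∧
          symMat ℝ ω *ᵥ u' (sel (glue ω x y)) = w' x (sel (glue ω x y))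
        then ∏ k : Fin n, (ρ k.castSucc (sel (glue ω x y)))⁻¹ else 0) := by
      intro ω x y k hk V' hV'
      generalize sel (glue ω x y) = t at *
      by_cases h : t ∈ good ∧ t ∈ V ∧ symMat ℝ (glue ω x y) *ᵥ u t = w t
      · rw [if_pos h]
        obtain ⟨hg, hV, h12⟩ := h
        obtain ⟨h1, h2⟩ := (symMat_glue_mulVec ω x y _ _).1 h12
        obtain ⟨hk1, hk2⟩ := hV' hg hV (by rw [hl]; linarith)
        rw [if_pos ⟨hg, hk2, h1⟩, Fin.prod_univ_castSucc, mul_comm]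
        refine mul_le_mul_of_nonneg_right hk1 (Finset.prod_nonneg fun i _ => ?_)
        exact (inv_pos.2 (hρ t hg _).1).le
      · rw [if_neg h]
        refine mul_nonneg hk ?_
        split_ifs with h3
        · exact Finset.prod_nonneg fun i _ => (inv_pos.2 (hρ t h3.1 _).1).le
        · exact le_rfl
    have hc00 : 0 ≤ c0 := by rw [hc0, prob_eq_sum]; positivity
    have hx : ∀ x y, ∑ ω, (if sel (glue ω x y) ∈ good ∧ sel (glue ω x y) ∈ V ∧ symMat ℝ (glue ω x y) *ᵥ u (sel (glue ω x y)) = w (sel (glue ω x y))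
        then ∏ k, (ρ k (sel (glue ω x y)))⁻¹ else 0)
        ≤ 2 ^ (n * n) * ((if Z x then c0⁻¹ * A else 0) + (A2 - A)) := by
      intro x y
      by_cases hZ : Z x
      · rw [if_pos hZ]
        have hc0p : 0 < c0 := by
          rw [hc0, prob_eq_sum]
          refine mul_pos (by simp) ?_
          refine Finset.sum_pos' (fun i _ => by split_ifs <;> norm_num) ⟨x, mem_univ _, by simp [hZ]⟩
        refine le_trans (Finset.sum_le_sum fun ω _ => hterm0 ω x y c0⁻¹ (by positivity) V ?_) ?_
        · intro hg hV _
          refine ⟨?_, hV⟩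
          apply inv_anti₀ hc0p
          refine le_trans ?_ (hprob _ hg (w (sel (glue ω x y)) (Fin.last n)))
          rw [hc0, prob_eq_sum, prob_eq_sum]
          refine mul_le_mul_of_nonneg_left (Finset.sum_le_sum fun z _ => ?_) (by positivity)
          by_cases hz : Z z
          · rw [if_pos hz, if_pos]
            have := hz _ hV
            rw [hl] at this; linarith
          · rw [if_neg hz]; split_ifs <;> norm_num
        · rw [← Finset.mul_sum]
          have := mul_le_mul_of_nonneg_left (hIH x y V) (inv_nonneg.2 hc00)
          refine this.trans ?_
          rw [← hd, ← hA]
          have : 0 ≤ (2:ℝ) ^ (n * n) * (A2 - A) := mul_nonneg (by positivity) (by linarith)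
          linarith
      · rw [if_neg hZ, zero_add]
        have hZ' : ∃ t ∈ V, l x t ≠ 0 := by
          simp only [Z] at hZ; push Not at hZ; exact hZ
        refine le_trans (Finset.sum_le_sum fun ω _ => hterm0 ω x y Q hQ0.le (V ⊓ LinearMap.ker (l x)) ?_) ?_
        · intro hg hV hl0
          exact ⟨(hρ _ hg _).2, hV, hl0⟩
        · rw [← Finset.mul_sum]
          have h1 := mul_le_mul_of_nonneg_left (hIH x y (V ⊓ LinearMap.ker (l x))) hQ0.le
          refine h1.trans ?_
          have hlt := finrank_ker_lt V (l x) hZ'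
          obtain ⟨e, he⟩ : ∃ e, d = e + 1 := ⟨d - 1, by omega⟩
          have h2 : (((n : ℝ) + 1) * Q) ^ Module.finrank ℝ (V ⊓ LinearMap.ker (l x) : Submodule ℝ T) ≤ (((n : ℝ) + 1) * Q) ^ e := by
            apply pow_le_pow_right₀
            · have : (0:ℝ) ≤ n := by positivity
              nlinarith
            · omega
          have h3 : Q * (((n : ℝ) + 1) * Q) ^ e ≤ A2 - A := by
            rw [hA, hA2, he]
            have h4 : (((n : ℝ) + 1) * Q) ^ e ≤ (((n + 1 : ℕ) + 1 : ℝ) * Q) ^ e := by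
              apply pow_le_pow_left₀ (by positivity)
              push_cast; nlinarith
            rw [pow_succ, pow_succ]
            have h5 : (0:ℝ) ≤ ((n + 1 : ℕ) + 1 : ℝ) * Q := by positivity
            have h6 := mul_le_mul_of_nonneg_right h4 h5
            push_cast at h6 ⊢
            nlinarith
          calc Q * (2 ^ (n * n) * (((n : ℝ) + 1) * Q) ^ Module.finrank ℝ (V ⊓ LinearMap.ker (l x) : Submodule ℝ T))
              = 2 ^ (n * n) * (Q * (((n : ℝ) + 1) * Q) ^ Module.finrank ℝ (V ⊓ LinearMap.ker (l x) : Submodule ℝ T)) := by ring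
            _ ≤ 2 ^ (n * n) * (Q * (((n : ℝ) + 1) * Q) ^ e) := by gcongr
            _ ≤ _ := by gcongr
    refine le_trans (Finset.sum_le_sum fun x _ => Finset.sum_le_sum fun y _ => hx x y) ?_
    simp only [Finset.sum_const, Finset.card_univ, Fintype.card_fun, Fintype.card_bool, Fintype.card_fin, nsmul_eq_mul]
    rw [← Finset.mul_sum, ← Finset.mul_sum, Finset.sum_add_distrib]
    simp only [Finset.sum_const, Finset.card_univ, Fintype.card_fun, Fintype.card_bool, Fintype.card_fin, nsmul_eq_mul]
    have hZs : ∑ x, (if Z x then c0⁻¹ * A else 0) ≤ 2 ^ (n + 1) * A := by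
      have : ∀ x, (if Z x then c0⁻¹ * A else 0) = c0⁻¹ * A * (if Z x then 1 else 0) := by
        intro x; split_ifs <;> simp
      simp_rw [this]
      rw [← Finset.mul_sum]
      have hc : ∑ x, (if Z x then (1:ℝ) else 0) = 2 ^ (n + 1) * c0 := by
        rw [hc0, prob_eq_sum]; simp
      rw [hc]
      rcases hc00.eq_or_lt with h | h
      · rw [← h]; simp; positivity
      · apply le_of_eq; field_simp
    have e2 : (2 : ℝ) ^ ((n + 1) * (n + 1)) = 2 ^ n * (2 ^ (n * n) * 2 ^ (n + 1)) := by
      rw [← pow_add, ← pow_add]; congr 1; ring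
    rw [e2]
    push_cast
    rw [mul_assoc, mul_assoc]
    refine mul_le_mul_of_nonneg_left (mul_le_mul_of_nonneg_left ?_ (by positivity)) (by positivity)
    linarith

end Piece5

section Piece6

theorem prob_nonneg {Ω : Type*} [Fintype Ω] (E : Ω → Prop) : 0 ≤ prob E := by
  unfold prob; positivity

theorem prob_mono {Ω : Type*} [Fintype Ω] {E F : Ω → Prop} (h : ∀ x, E x → F x) :
    prob E ≤ prob F := by
  classical
  unfold prob
  refine div_le_div_of_nonneg_right ?_ (by positivity)
  exact_mod_cast Finset.card_le_card (Finset.monotone_filter_right _ (fun x _ => h x))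

theorem prob_equiv {Ω Ω' : Type*} [Fintype Ω] [Fintype Ω'] (e : Ω ≃ Ω') (E : Ω' → Prop) :
    prob (fun x => E (e x)) = prob E := by
  classical
  rw [prob_eq_sum, prob_eq_sum, Fintype.card_congr e, ← Equiv.sum_comp e]

theorem prob_exists_le {Ω κ : Type*} [Fintype Ω] (S : Finset κ) (E : κ → Ω → Prop) :
    prob (fun x => ∃ k ∈ S, E k x) ≤ ∑ k ∈ S, prob (E k) := by
  classical
  simp only [prob_eq_sum]
  rw [← Finset.mul_sum, Finset.sum_comm]
  refine mul_le_mul_of_nonneg_left (Finset.sum_le_sum fun x _ => ?_) (by positivity)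
  split_ifs with h
  · obtain ⟨k, hk, hE⟩ := h
    have := Finset.single_le_sum (f := fun k => if E k x then (1:ℝ) else 0)
      (fun i _ => by split_ifs <;> norm_num) hk
    simpa [hE] using this
  · exact Finset.sum_nonneg fun i _ => by split_ifs <;> norm_num

theorem prob_or_le {Ω : Type*} [Fintype Ω] (E F : Ω → Prop) :
    prob (fun x => E x ∨ F x) ≤ prob E + prob F := by
  classical
  simp only [prob_eq_sum]
  rw [← mul_add, ← Finset.sum_add_distrib]
  refine mul_le_mul_of_nonneg_left (Finset.sum_le_sum fun x _ => ?_) (by positivity)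
  by_cases h1 : E x <;> by_cases h2 : F x <;> simp [h1, h2]

def tau {n : ℕ} (σ : Equiv.Perm (Fin n)) (i j : Fin n) : Fin n × Fin n :=
  if (i ≤ j ↔ σ i ≤ σ j) then (σ i, σ j) else (σ j, σ i)

theorem tau_tau {n : ℕ} (σ π : Equiv.Perm (Fin n)) (h : ∀ i, π (σ i) = i) (i j : Fin n) :
    tau π (tau σ i j).1 (tau σ i j).2 = (i, j) := by
  by_cases hc : (i ≤ j ↔ σ i ≤ σ j)
  · simp [tau, hc, h]
  · have hne : i ≠ j := by rintro rfl; simp at hc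
    have hne' : σ i ≠ σ j := fun h => hne (σ.injective h)
    have hc2 : ¬ (σ j ≤ σ i ↔ j ≤ i) := by
      have a : j ≤ i ↔ ¬ i ≤ j := ⟨fun h h' => hne (le_antisymm h' h), fun h => le_of_not_ge h⟩
      have b : σ j ≤ σ i ↔ ¬ σ i ≤ σ j := ⟨fun h h' => hne' (le_antisymm h' h), fun h => le_of_not_ge h⟩
      rw [a, b]; tauto
    simp [tau, hc, h, hc2]

def permEquiv {n : ℕ} (σ : Equiv.Perm (Fin n)) :
    (Fin n → Fin n → Bool) ≃ (Fin n → Fin n → Bool) where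
  toFun ω := fun i j => ω (tau σ i j).1 (tau σ i j).2
  invFun ω := fun i j => ω (tau σ.symm i j).1 (tau σ.symm i j).2
  left_inv ω := by
    funext i j
    have := tau_tau σ.symm σ (by simp) i j
    simp [this]
  right_inv ω := by
    funext i j
    have := tau_tau σ σ.symm (by simp) i j
    simp [this]

theorem symMat_comm {n : ℕ} (ω : Fin n → Fin n → Bool) (i j : Fin n) :
    symMat ℝ ω i j = symMat ℝ ω j i := by
  simp [symMat, min_comm, max_comm]

theorem symMat_perm {n : ℕ} (σ : Equiv.Perm (Fin n)) (ω : Fin n → Fin n → Bool) (i j : Fin n) :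
    symMat ℝ (permEquiv σ ω) i j = symMat ℝ ω (σ i) (σ j) := by
  have key : ∀ i j, i ≤ j → symMat ℝ (permEquiv σ ω) i j = symMat ℝ ω (σ i) (σ j) := by
    intro i j hij
    simp only [symMat, Matrix.of_apply, permEquiv, Equiv.coe_fn_mk]
    rw [min_eq_left hij, max_eq_right hij]
    by_cases h : σ i ≤ σ j
    · simp [tau, hij, h]
    · have h' : σ j ≤ σ i := le_of_not_ge h
      simp [tau, hij, h, h']
  rcases le_total i j with h | h
  · exact key i j h
  · rw [symMat_comm, symMat_comm ω]; exact key j i h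

theorem transport {n : ℕ} (σ : Equiv.Perm (Fin n)) (P : (Fin n → ℝ) → Prop) :
    prob (fun ω : Fin n → Fin n → Bool => ∃ (l : ℝ) (v : Fin n → ℝ), symMat ℝ ω *ᵥ v = l • v ∧ P v)
      ≤ prob (fun ω : Fin n → Fin n → Bool => ∃ (l : ℝ) (v : Fin n → ℝ), symMat ℝ ω *ᵥ v = l • v ∧
          P (fun i => v (σ.symm i))) := by
  rw [← prob_equiv (permEquiv σ) (fun ω => ∃ (l : ℝ) (v : Fin n → ℝ), symMat ℝ ω *ᵥ v = l • v ∧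
          P (fun i => v (σ.symm i)))]
  refine prob_mono fun ω => ?_
  rintro ⟨l, v, hv, hP⟩
  refine ⟨l, fun i => v (σ i), ?_, by simpa using hP⟩
  funext i
  have := congrFun hv (σ i)
  simp only [Matrix.mulVec, dotProduct, Pi.smul_apply] at this ⊢
  rw [← this]
  simp_rw [symMat_perm]
  exact Equiv.sum_comp σ (fun j => symMat ℝ ω (σ i) j * v j)

end Piece6

section Piece7

def EV {n : ℕ} (P : (Fin n → ℝ) → Prop) (ω : Fin n → Fin n → Bool) : Prop :=
  ∃ (l : ℝ) (v : Fin n → ℝ), symMat ℝ ω *ᵥ v = l • v ∧ P v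

theorem EV_mono {n : ℕ} {P P' : (Fin n → ℝ) → Prop} (h : ∀ v, P v → P' v) :
    prob (EV P) ≤ prob (EV P') :=
  prob_mono fun _ ⟨l, v, h1, h2⟩ => ⟨l, v, h1, h v h2⟩

theorem transport_set {n m : ℕ} (S : Finset (Fin n)) (hS : S.card = m) (P : (Fin n → ℝ) → Prop) :
    ∃ σ : Equiv.Perm (Fin n), (∀ i, σ i ∈ S ↔ (i : ℕ) < m) ∧
      prob (EV P) ≤ prob (EV fun v => P (fun i => v (σ.symm i))) := by
  classical
  have hm : m ≤ n := by rw [← hS]; simpa using Finset.card_le_univ S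
  have hc : Fintype.card {i : Fin n // (i : ℕ) < m} = Fintype.card {i : Fin n // i ∈ S} := by
    rw [Fintype.card_coe, hS, Fintype.card_subtype]
    have : (univ.filter fun i : Fin n => (i : ℕ) < m) = (univ : Finset (Fin m)).map (Fin.castLEEmb hm) := by
      ext i
      simp only [mem_filter, mem_univ, true_and, Finset.mem_map]
      constructor
      · intro h; exact ⟨⟨i, h⟩, by ext; simp⟩
      · rintro ⟨a, ha⟩; rw [← ha]; simp
    rw [this]; simp
  let e := Fintype.equivOfCardEq hc
  refine ⟨e.extendSubtype, ?_, transport _ P⟩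
  intro i
  constructor
  · intro h
    by_contra hi
    exact e.extendSubtype_not_mem i hi h
  · intro h
    exact e.extendSubtype_mem i h

theorem Fev {n : ℕ} {A : Type} [AddCommGroup A] [Module ℝ A] [FiniteDimensional ℝ A]
    (f : A →ₗ[ℝ] (Fin n → ℝ)) (Q : ℝ) (hQ : 1 ≤ Q) (good : Set (Fin n → ℝ))
    (r : Fin n → (Fin n → ℝ) → ℝ)
    (hr : ∀ t ∈ good, ∀ k, 0 < r k t ∧ (r k t)⁻¹ ≤ Q)
    (hpr : ∀ t ∈ good, ∀ k a, prob (fun x : Fin n → Bool =>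
        ∑ i, (if i ≤ k then signb ℝ (x i) * t i else 0) = a) ≤ r k t)
    (v : (Fin n → Fin n → Bool) → Fin n → ℝ) (l : (Fin n → Fin n → Bool) → ℝ)
    (S : Finset (Fin n → Fin n → Bool))
    (hS : ∀ ω ∈ S, symMat ℝ ω *ᵥ v ω = l ω • v ω ∧ v ω ∈ good ∧ v ω ∈ LinearMap.range f) :
    ∑ ω ∈ S, ∏ k, (r k (v ω))⁻¹ ≤ 2 ^ (n * n) * (((n : ℝ) + 1) * Q) ^ (2 * Module.finrank ℝ A) := by
  classical
  have h := Flem (T := (Fin n → ℝ) × (Fin n → ℝ)) Q hQ n (LinearMap.range (f.prodMap f))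
    (LinearMap.fst ℝ _ _) (LinearMap.snd ℝ _ _) (Prod.fst ⁻¹' good) (fun k t => r k t.1)
    (fun t ht k => hr _ ht k) (fun t ht k a => hpr _ ht k a) (fun ω => (v ω, l ω • v ω))
  have hfr : Module.finrank ℝ (LinearMap.range (f.prodMap f)) ≤ 2 * Module.finrank ℝ A := by
    refine (LinearMap.finrank_range_le _).trans ?_
    rw [Module.finrank_prod]; omega
  have h2 : (((n : ℝ) + 1) * Q) ^ Module.finrank ℝ (LinearMap.range (f.prodMap f))
      ≤ (((n : ℝ) + 1) * Q) ^ (2 * Module.finrank ℝ A) := by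
    apply pow_le_pow_right₀ _ hfr
    have : (0:ℝ) ≤ n := by positivity
    nlinarith
  refine le_trans ?_ (h.trans (mul_le_mul_of_nonneg_left h2 (by positivity)))
  rw [← Finset.sum_filter]
  refine le_trans (Finset.sum_le_sum_of_subset_of_nonneg ?_ ?_) (le_of_eq rfl)
  · intro ω hω
    obtain ⟨h1, h2, ⟨a, ha⟩⟩ := hS ω hω
    simp only [mem_filter, mem_univ, true_and]
    refine ⟨h2, ⟨(a, l ω • a), ?_⟩, h1⟩
    simp [LinearMap.prodMap_apply, ha]
  · intro ω hω _
    simp only [mem_filter] at hω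
    exact Finset.prod_nonneg fun k _ => (inv_pos.2 (hr _ hω.2.1 k).1).le

theorem prob_eq_card {n : ℕ} (E : (Fin n → Fin n → Bool) → Prop) [DecidablePred E] :
    prob E = ((univ.filter E).card : ℝ) / 2 ^ (n * n) := by
  unfold prob
  congr 1
  · congr!
  · simp [pow_mul]

theorem prob_le_one {Ω : Type*} [Fintype Ω] (E : Ω → Prop) : prob E ≤ 1 := by
  classical
  unfold prob
  apply div_le_one_of_le₀ _ (by positivity)
  exact_mod_cast Finset.card_le_univ _

theorem ff_le_34 {n : ℕ} (v : Fin n → ℝ) (P : Finset (Fin n)) (i0 : Fin n) (hi : i0 ∈ P)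
    (hv : v i0 ≠ 0) : ff (fun i => if i ∈ P then 1 / 4 else 0) v ≤ 3 / 4 := by
  refine le_trans (ff_anti (ν := fun i => if i = i0 then 1 / 4 else 0) (fun i => ?_) v) ?_
  · by_cases h : i = i0
    · subst h; simp [hi]; norm_num
    · simp only [h, if_false]; split_ifs <;> norm_num
  · obtain ⟨p, hp, _, w, hw, hff, -⟩ := exists_model v 0
    rw [hff]
    have : ∀ ξ : ZMod p, ∏ i, (1 - (if i = i0 then (1 / 4 : ℝ) else 0) * (1 - cc (ξ * w i)))
        = 3 / 4 + 1 / 4 * cc (ξ * w i0) := by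
      intro ξ
      rw [Finset.prod_eq_single i0]
      · simp; ring
      · intro b _ hb; simp [hb]
      · simp
    simp_rw [this]
    rw [Finset.sum_add_distrib, ← Finset.mul_sum, sum_cc, if_neg (by rw [hw]; exact hv)]
    have hp0 : (p : ℝ) ≠ 0 := by exact_mod_cast hp.out.ne_zero
    simp [ZMod.card]
    field_simp
    norm_num

def ext0 (k n : ℕ) : (Fin k → ℝ) →ₗ[ℝ] (Fin n → ℝ) where
  toFun g := fun i => if h : (i : ℕ) < k then g ⟨i, h⟩ else 0
  map_add' g g' := by funext i; by_cases h : (i : ℕ) < k <;> simp [h]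
  map_smul' c g := by funext i; by_cases h : (i : ℕ) < k <;> simp [h]

theorem sparse_first {n k : ℕ} (hk : k ≤ n) :
    prob (EV fun v : Fin n → ℝ => v ≠ 0 ∧ ∀ i : Fin n, k ≤ (i : ℕ) → v i = 0)
      ≤ (((n : ℝ) + 1) * 2) ^ (2 * k) * (3 / 4) ^ (n - k) := by
  classical
  set P : (Fin n → ℝ) → Prop := fun v : Fin n → ℝ => v ≠ 0 ∧ ∀ i : Fin n, k ≤ (i : ℕ) → v i = 0 with hP
  let S := univ.filter (EV P)
  have hch : ∀ ω, ∃ (l : ℝ) (v : Fin n → ℝ), ω ∈ S → symMat ℝ ω *ᵥ v = l • v ∧ P v := by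
    intro ω
    by_cases h : ω ∈ S
    · obtain ⟨l, v, h1⟩ := (mem_filter.1 h).2
      exact ⟨l, v, fun _ => h1⟩
    · exact ⟨0, 0, fun h' => absurd h' h⟩
  choose l v hlv using hch
  let r : Fin n → (Fin n → ℝ) → ℝ := fun i _ => if (i : ℕ) < k then 1 else 3 / 4
  have h := Fev (ext0 k n) 2 (by norm_num) {v | P v} r
    (by intro t _ i; simp only [r]; split_ifs <;> norm_num)
    (by
      intro t ht i a
      simp only [r]
      split_ifs with hi
      · exact prob_le_one _
      · obtain ⟨ht0, ht1⟩ := ht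
        obtain ⟨i0, hi0⟩ : ∃ i0, t i0 ≠ 0 := by
          by_contra hcon; push Not at hcon; exact ht0 (funext hcon)
        have hlt : (i0 : ℕ) < k := by
          by_contra hcon; exact hi0 (ht1 i0 (not_lt.1 hcon))
        have h1 := prob_le_ff t (univ.filter fun j => j ≤ i) a
        have h2 := ff_le_34 t (univ.filter fun j => j ≤ i) i0 (by
          simp only [mem_filter, mem_univ, true_and]; rw [Fin.le_def]; omega) hi0
        refine le_trans ?_ (h1.trans h2)
        simp only [mem_filter, mem_univ, true_and]
        exact le_rfl)
    v l S (by
      intro ω hω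
      obtain ⟨h1, h2⟩ := hlv ω hω
      refine ⟨h1, h2, fun j => v ω ⟨j, by omega⟩, ?_⟩
      funext i
      by_cases hi : (i : ℕ) < k
      · simp [ext0, hi]
      · simp [ext0, hi]; exact (h2.2 i (not_lt.1 hi)).symm)
  have hprod : ∀ t, ∏ i, (r i t)⁻¹ = (4 / 3) ^ (n - k) := by
    intro t
    simp only [r]
    obtain ⟨m, rfl⟩ := Nat.exists_eq_add_of_le hk
    rw [Fin.prod_univ_add]
    simp
    rw [div_pow]
  simp_rw [hprod] at h
  rw [Finset.sum_const, nsmul_eq_mul] at h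
  rw [prob_eq_card, div_le_iff₀ (by positivity)]
  have e : ((3 : ℝ) / 4) ^ (n - k) * (4 / 3) ^ (n - k) = 1 := by rw [← mul_pow]; norm_num
  have hf : Module.finrank ℝ (Fin k → ℝ) = k := by simp
  rw [hf] at h
  calc ((univ.filter (EV P)).card : ℝ) = (S.card : ℝ) * (4 / 3) ^ (n - k) * (3 / 4) ^ (n - k) := by
        rw [mul_assoc, mul_comm ((4 / 3 : ℝ) ^ (n - k)), e, mul_one]
    _ ≤ (2 ^ (n * n) * (((n : ℝ) + 1) * 2) ^ (2 * k)) * (3 / 4) ^ (n - k) :=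
        mul_le_mul_of_nonneg_right h (by positivity)
    _ = _ := by ring

theorem sparse {n k : ℕ} (hk : k ≤ n) :
    prob (EV fun v : Fin n → ℝ => v ≠ 0 ∧ (univ.filter fun i => v i ≠ 0).card ≤ k)
      ≤ (n : ℝ) ^ k * ((((n : ℝ) + 1) * 2) ^ (2 * k) * (3 / 4) ^ (n - k)) := by
  classical
  have h1 : prob (EV fun v : Fin n → ℝ => v ≠ 0 ∧ (univ.filter fun i => v i ≠ 0).card ≤ k)
      ≤ prob (fun ω => ∃ S ∈ Finset.powersetCard k (univ : Finset (Fin n)),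
          EV (fun v => v ≠ 0 ∧ ∀ i, i ∉ S → v i = 0) ω) := by
    refine prob_mono fun ω => ?_
    rintro ⟨l, v, hv, hv0, hc⟩
    obtain ⟨S, hs, _, hS⟩ := Finset.exists_subsuperset_card_eq
      (Finset.subset_univ (univ.filter fun i => v i ≠ 0)) hc (by simpa using hk)
    refine ⟨S, by simp [Finset.mem_powersetCard, hS], l, v, hv, hv0, fun i hi => ?_⟩
    by_contra hvi
    exact hi (hs (by simp [hvi]))
  refine h1.trans ((prob_exists_le _ _).trans ?_)
  have h2 : ∀ S ∈ Finset.powersetCard k (univ : Finset (Fin n)),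
      prob (EV fun v : Fin n → ℝ => v ≠ 0 ∧ ∀ i, i ∉ S → v i = 0)
        ≤ (((n : ℝ) + 1) * 2) ^ (2 * k) * (3 / 4) ^ (n - k) := by
    intro S hS
    obtain ⟨σ, hσ, hle⟩ := transport_set S (Finset.mem_powersetCard.1 hS).2
      (fun v : Fin n → ℝ => v ≠ 0 ∧ ∀ i, i ∉ S → v i = 0)
    refine hle.trans ((EV_mono fun v hv => ?_).trans (sparse_first hk))
    refine ⟨?_, fun i hi => ?_⟩
    · rintro rfl; exact hv.1 (by funext i; simp)
    · have := hv.2 (σ i) (by rw [hσ]; omega)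
      simpa using this
  refine (Finset.sum_le_sum h2).trans ?_
  rw [Finset.sum_const, nsmul_eq_mul, Finset.card_powersetCard, Finset.card_univ, Fintype.card_fin]
  refine mul_le_mul_of_nonneg_right ?_ (by positivity)
  exact_mod_cast Nat.choose_le_pow n k

end Piece7

section Piece8

theorem ff_perm {n : ℕ} (σ : Equiv.Perm (Fin n)) (μ v : Fin n → ℝ) :
    ff (fun i => μ (σ i)) (fun i => v (σ i)) = ff μ v := by
  classical
  unfold ff
  symm
  rw [← Equiv.sum_comp (Equiv.arrowCongr σ (Equiv.refl SignType))]
  refine Finset.sum_congr rfl fun Y _ => ?_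
  have h1 : ∑ i, ((Y i : SignType) : ℝ) * v (σ i)
      = ∑ i, (((Equiv.arrowCongr σ (Equiv.refl SignType)) Y i : SignType) : ℝ) * v i := by
    rw [← Equiv.sum_comp σ (fun i => (((Equiv.arrowCongr σ (Equiv.refl SignType)) Y i : SignType) : ℝ) * v i)]
    simp [Equiv.arrowCongr]
  have h2 : WW (fun i => μ (σ i)) Y = WW μ ((Equiv.arrowCongr σ (Equiv.refl SignType)) Y) := by
    unfold WW
    rw [← Equiv.prod_comp σ (fun i => wt (μ i) ((Equiv.arrowCongr σ (Equiv.refl SignType)) Y i))]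
    simp [Equiv.arrowCongr]
  rw [← h1, h2]

def RR {n : ℕ} (l : ℕ) (v : Fin n → ℝ) : ℝ := ff (fun i : Fin n => if (i : ℕ) < l then 1 / 4 else 0) v

theorem RR_anti {n : ℕ} {l l' : ℕ} (h : l ≤ l') (v : Fin n → ℝ) : RR l' v ≤ RR l v := by
  refine ff_anti (fun i => ?_) v
  by_cases h1 : (i : ℕ) < l
  · have : (i : ℕ) < l' := by omega
    simp [h1, this]; norm_num
  · simp only [h1, if_false]; split_ifs <;> norm_num

theorem RR_le_one {n : ℕ} (l : ℕ) (v : Fin n → ℝ) : RR l v ≤ 1 :=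
  ff_le_one (fun i => by split_ifs <;> norm_num) v

def GG (n E j : ℕ) (v : Fin n → ℝ) : Prop :=
  (1 / 2 : ℝ) ^ E ≤ RR n v ∧ RR (n / 2) v ≤ 2 * ff (fun _ => 1 / 8) v ∧
    ff (fun _ => 1 / 8) v ≤ 5 / j * ff (fun _ => 1 / (32 * (j : ℝ) ^ 3)) v

theorem RR_n {n : ℕ} (v : Fin n → ℝ) : RR n v = ff (fun _ => 1 / 4) v := by
  unfold RR; congr 1; funext i; simp

theorem core_step {n E j s D : ℕ} (hj : 5 ≤ j) (hs : s = 6 * (E + 1)) (hD : D = 32 * j ^ 3 * (E + 1))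
    (k : ℕ) (hk : k < n - s) (U : Submodule ℝ (Fin n → ℝ)) (hU : Module.finrank ℝ U = n - k)
    (v : Fin n → ℝ) (hv : GG n E j v) (μ : Fin n → ℝ) (c : ℝ)
    (hμc : (k + s < n / 2 ∧ μ = (fun i : Fin n => if (i : ℕ) < k + s + 1 then 1 / 4 else 0) ∧ c = 1) ∨
      (n / 2 ≤ k + s ∧ k < n - D ∧ μ = (fun _ => 1 / (32 * (j : ℝ) ^ 3)) ∧ c = (j : ℝ) / 5) ∨
      (n / 2 ≤ k + s ∧ μ = (fun _ => 1 / 8) ∧ c = 1)) :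
    RR (k + s + 1) v * c / 4 ≤ ff μ v - PU μ U := by
  obtain ⟨h1, h2, h3⟩ := hv
  have hR1 : RR n v ≤ RR (k + s + 1) v := RR_anti (by omega) v
  have hE0 : (0 : ℝ) < (1 / 2) ^ E := by positivity
  have hEs : (1 / 2 : ℝ) ^ (E + 1) = (1 / 2) ^ E / 2 := by rw [pow_succ]; ring
  rw [RR_n] at h1 hR1
  have hj0 : (5 : ℝ) ≤ j := by exact_mod_cast hj
  have hj3 : (1 : ℝ) ≤ (j : ℝ) ^ 3 := one_le_pow₀ (by linarith)
  rcases hμc with ⟨a1, rfl, rfl⟩ | ⟨a1, a2, rfl, rfl⟩ | ⟨a1, rfl, rfl⟩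
  · have hP := odlyzko_set (fun i : Fin n => if (i : ℕ) < k + s + 1 then (1 / 4 : ℝ) else 0)
      (fun i => by split_ifs <;> norm_num) (univ.filter fun i : Fin n => (i : ℕ) < k + s + 1)
      (3 / 4) (by norm_num) (fun i hi => by
        simp only [mem_filter, mem_univ, true_and] at hi; simp only [hi, if_true]; norm_num) U (s + 1) (by
        rw [hU]
        have : (univ.filter fun i : Fin n => (i : ℕ) < k + s + 1).card = k + s + 1 := by
          rw [Fin.card_filter_val_lt]; omega
        rw [this]; omega)
    have h4 : (3 / 4 : ℝ) ^ (s + 1) ≤ (1 / 2) ^ (E + 1) := by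
      calc (3 / 4 : ℝ) ^ (s + 1) ≤ (3 / 4) ^ s := pow_le_pow_of_le_one (by norm_num) (by norm_num) (by omega)
        _ = ((3 / 4) ^ 6) ^ (E + 1) := by rw [hs, pow_mul]
        _ ≤ _ := pow_le_pow_left₀ (by norm_num) (by norm_num) _
    change RR (k + s + 1) v * 1 / 4 ≤ RR (k + s + 1) v - _
    linarith
  · have hm0 : (0 : ℝ) ≤ 1 / (32 * (j : ℝ) ^ 3) := by positivity
    have hm1 : 1 / (32 * (j : ℝ) ^ 3) ≤ 1 / 32 := by
      apply one_div_le_one_div_of_le <;> linarith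
    set m := 1 / (32 * (j : ℝ) ^ 3) with hm
    have hP := odlyzko_set (fun i : Fin n => m) (fun i => ⟨hm0, by linarith⟩) univ (1 - m) (by linarith)
      (fun i hi => ⟨le_rfl, by linarith⟩) U D (by rw [hU, card_univ, Fintype.card_fin]; omega)
    have h4 : (1 - m) ^ D ≤ (1 / 2) ^ (E + 1) := by
      rw [hD, pow_mul]
      refine pow_le_pow_left₀ (by apply pow_nonneg; linarith) ?_ _
      have e1 : (1 - m) ≤ Real.exp (-m) := by linarith [Real.add_one_le_exp (-m)]
      calc (1 - m) ^ (32 * j ^ 3) ≤ (Real.exp (-m)) ^ (32 * j ^ 3) := pow_le_pow_left₀ (by linarith) e1 _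
        _ = Real.exp (-1) := by
          rw [← Real.exp_nat_mul]; congr 1; push_cast; rw [hm]; field_simp
        _ ≤ 1 / 2 := by
          rw [Real.exp_neg, one_div]
          apply inv_anti₀ (by norm_num)
          linarith [Real.add_one_le_exp (1 : ℝ)]
    have h5 : ff (fun _ => 1 / 4) v ≤ ff (fun _ => m) v := ff_anti (fun i => ⟨hm0, by linarith, by norm_num⟩) v
    have h6 : RR (k + s + 1) v ≤ RR (n / 2) v := RR_anti (by omega) v
    have h7 : RR (k + s + 1) v ≤ 2 * (5 / j * ff (fun _ => m) v) := by linarith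
    have h8 : RR (k + s + 1) v * (j / 5) ≤ 2 * ff (fun _ => m) v := by
      calc RR (k + s + 1) v * (j / 5) ≤ 2 * (5 / j * ff (fun _ => m) v) * (j / 5) :=
            mul_le_mul_of_nonneg_right h7 (by positivity)
        _ = _ := by field_simp
    linarith
  · have hP := odlyzko_set (fun i : Fin n => (1 / 8 : ℝ)) (fun i => by norm_num) univ (7 / 8) (by norm_num)
      (fun i hi => by norm_num) U s (by rw [hU, card_univ, Fintype.card_fin]; omega)
    have h4 : (7 / 8 : ℝ) ^ s ≤ (1 / 2) ^ (E + 1) := by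
      rw [hs, pow_mul]
      exact pow_le_pow_left₀ (by norm_num) (by norm_num) _
    have h5 : ff (fun _ => 1 / 4) v ≤ ff (fun _ => 1 / 8) v := ff_anti (fun i => by norm_num) v
    have h6 : RR (k + s + 1) v ≤ RR (n / 2) v := RR_anti (by omega) v
    linarith

theorem core {n E j s D g : ℕ} (hj : 5 ≤ j) (hs : s = 6 * (E + 1)) (hD : D = 32 * j ^ 3 * (E + 1))
    (hsm : s ≤ n) (hg : g + D + n / 2 ≤ n) :
    prob (EV (GG n E j)) ≤ 4 ^ n * (5 / (j : ℝ)) ^ g * (((n : ℝ) + 1) * 2 ^ E) ^ (2 * s) := by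
  classical
  let S := univ.filter (EV (GG n E j))
  have hj0 : (5 : ℝ) ≤ j := by exact_mod_cast hj
  have hsD : s ≤ D := by
    rw [hs, hD]
    refine Nat.mul_le_mul_right _ ?_
    have : 1 ≤ j ^ 3 := Nat.one_le_pow _ _ (by omega)
    omega
  rw [prob_eq_card, div_le_iff₀ (by positivity)]
  by_cases hne : S.Nonempty
  swap
  · rw [Finset.not_nonempty_iff_eq_empty] at hne
    change (S.card : ℝ) ≤ _
    rw [hne]; simp only [card_empty, Nat.cast_zero]; positivity
  have hch : ∀ ω, ∃ (l : ℝ) (v : Fin n → ℝ), ω ∈ S → symMat ℝ ω *ᵥ v = l • v ∧ GG n E j v := by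
    intro ω
    by_cases h : ω ∈ S
    · obtain ⟨l, v, h1⟩ := (mem_filter.1 h).2
      exact ⟨l, v, fun _ => h1⟩
    · exact ⟨0, 0, fun h' => absurd h' h⟩
  choose l v hlv using hch
  let μ : ℕ → Fin n → ℝ := fun k => if k + s < n / 2 then (fun i : Fin n => if (i : ℕ) < k + s + 1 then 1 / 4 else 0)
    else if k < n - D then (fun _ => 1 / (32 * (j : ℝ) ^ 3)) else (fun _ => 1 / 8)
  let c : ℕ → ℝ := fun k => if n / 2 ≤ k + s ∧ k < n - D then (j : ℝ) / 5 else 1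
  have hc1 : ∀ k, 1 ≤ c k := by
    intro k; simp only [c]; split_ifs
    · rw [le_div_iff₀] <;> linarith
    · exact le_rfl
  have hRpos : ∀ t, GG n E j t → ∀ l, l ≤ n → (1 / 2 : ℝ) ^ E ≤ RR l t := by
    intro t ht l hl
    exact ht.1.trans (RR_anti hl t)
  have hEpos : (0 : ℝ) < (1 / 2) ^ E := by positivity
  obtain ⟨U, hU, hcard⟩ := greedy (n := n) (K := n - s) S hne v μ (by
      intro k i
      have hj3 : (1 : ℝ) ≤ (j : ℝ) ^ 3 := one_le_pow₀ (by linarith)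
      have hm1 : 1 / (32 * (j : ℝ) ^ 3) ≤ 1 := by
        rw [div_le_one (by positivity)]; linarith
      have hm0 : (0 : ℝ) ≤ 1 / (32 * (j : ℝ) ^ 3) := by positivity
      simp only [μ]
      split_ifs
      · dsimp only; split_ifs <;> norm_num
      · exact ⟨hm0, hm1⟩
      · norm_num)
    (fun k ω => RR (k + s + 1) (v ω) * c k / 4)
    (by
      intro k hk ω hω
      have := hRpos _ (hlv ω hω).2 (k + s + 1) (by omega)
      have := hc1 k
      have : 0 < RR (k + s + 1) (v ω) := by linarith
      positivity)
    (by omega)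
    (by
      intro k hk U hU ω hω hv
      refine core_step hj hs hD k hk U hU _ (hlv ω hω).2 (μ k) (c k) ?_
      simp only [μ, c]
      by_cases h1 : k + s < n / 2
      · left; simp [h1]
      · by_cases h2 : k < n - D
        · right; left; simp [h1, h2]; omega
        · right; right; simp [h1, h2]; omega)
    (n - s) le_rfl
  have hfin : Module.finrank ℝ U = s := by omega
  have hF := Fev U.subtype (2 ^ E) (one_le_pow₀ (by norm_num)) {t | GG n E j t}
    (fun k t => RR (k + 1) t)
    (by
      intro t ht k
      have h := hRpos t ht (k + 1) (by omega)
      refine ⟨by linarith, ?_⟩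
      have := inv_anti₀ hEpos h
      simpa using this)
    (by
      intro t ht k a
      have h1 := prob_le_ff t (univ.filter fun j => j ≤ k) a
      simp only [mem_filter, mem_univ, true_and] at h1
      refine h1.trans (le_of_eq ?_)
      unfold RR; congr 1; funext i
      simp only [Fin.le_def, Nat.lt_succ_iff])
    v l (S.filter fun ω => v ω ∈ U) (by
      intro ω hω
      obtain ⟨h1, h2⟩ := mem_filter.1 hω
      exact ⟨(hlv ω h1).1, (hlv ω h1).2, by simpa using h2⟩)
  rw [hfin] at hF
  rw [← Finset.sum_filter] at hcard
  have hpt : ∀ ω ∈ S.filter (fun ω => v ω ∈ U), ∏ k ∈ range (n - s), (RR (k + s + 1) (v ω) * c k / 4)⁻¹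
      ≤ (4 ^ n * (5 / (j : ℝ)) ^ g) * ∏ k : Fin n, (RR (k + 1) (v ω))⁻¹ := by
    intro ω hω
    have hG := (hlv ω (mem_filter.1 hω).1).2
    have e1 : ∏ k ∈ range (n - s), (RR (k + s + 1) (v ω) * c k / 4)⁻¹
        = 4 ^ (n - s) * (∏ k ∈ range (n - s), (c k)⁻¹) * ∏ k ∈ range (n - s), (RR (k + s + 1) (v ω))⁻¹ := by
      rw [← Finset.card_range (n - s), ← Finset.prod_const, Finset.card_range, ← Finset.prod_mul_distrib,
        ← Finset.prod_mul_distrib]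
      refine Finset.prod_congr rfl fun k _ => ?_
      rw [inv_div, div_eq_mul_inv, mul_inv]; ring
    have e2 : ∏ k ∈ range (n - s), (c k)⁻¹ ≤ (5 / (j : ℝ)) ^ g := by
      have hsub : Finset.Ico (n / 2 - s) (n - D) ⊆ range (n - s) := by
        intro k hk; simp only [mem_Ico, mem_range] at hk ⊢; omega
      have hle1 : (5 / (j : ℝ)) ≤ 1 := by rw [div_le_one (by linarith)]; exact hj0
      calc ∏ k ∈ range (n - s), (c k)⁻¹ ≤ ∏ k ∈ Finset.Ico (n / 2 - s) (n - D), (c k)⁻¹ := by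
            have hn : ∀ k, 0 ≤ (c k)⁻¹ := fun k => inv_nonneg.2 (by linarith [hc1 k])
            rw [← Finset.prod_sdiff hsub]
            exact mul_le_of_le_one_left (Finset.prod_nonneg fun k _ => hn k)
              (Finset.prod_le_one (fun k _ => hn k) fun k _ => inv_le_one_of_one_le₀ (hc1 k))
        _ = ∏ k ∈ Finset.Ico (n / 2 - s) (n - D), (5 / (j : ℝ)) := by
            refine Finset.prod_congr rfl fun k hk => ?_
            simp only [mem_Ico] at hk
            have : n / 2 ≤ k + s ∧ k < n - D := by omega
            simp [c, this]
        _ = (5 / (j : ℝ)) ^ (n - D - (n / 2 - s)) := by rw [prod_const, Nat.card_Ico]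
        _ ≤ _ := pow_le_pow_of_le_one (by positivity) hle1 (by omega)
    have e3 : ∏ k ∈ range (n - s), (RR (k + s + 1) (v ω))⁻¹ ≤ ∏ k : Fin n, (RR (k + 1) (v ω))⁻¹ := by
      rw [Fin.prod_univ_eq_prod_range (fun k => (RR (k + 1) (v ω))⁻¹) n]
      have : ∏ k ∈ range n, (RR (k + 1) (v ω))⁻¹ = (∏ k ∈ range s, (RR (k + 1) (v ω))⁻¹) *
          ∏ k ∈ range (n - s), (RR (k + s + 1) (v ω))⁻¹ := by
        have gen : ∀ (F : ℕ → ℝ) (a b : ℕ), ∏ k ∈ range (a + b), F (k + 1)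
            = (∏ k ∈ range a, F (k + 1)) * ∏ k ∈ range b, F (k + a + 1) := by
          intro F a b
          rw [Finset.prod_range_add]
          congr 1
          refine Finset.prod_congr rfl fun k _ => ?_
          rw [add_comm a k]
        have := gen (fun l => (RR l (v ω))⁻¹) s (n - s)
        rwa [Nat.add_sub_cancel' hsm] at this
      rw [this]
      refine le_mul_of_one_le_left ?_ ?_
      · refine Finset.prod_nonneg fun k hk => inv_nonneg.2 ?_
        have := hRpos _ hG (k + s + 1) (by have := mem_range.1 hk; omega)
        linarith
      · calc (1 : ℝ) = ∏ k ∈ range s, 1 := by simp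
          _ ≤ _ := Finset.prod_le_prod (fun _ _ => by norm_num) fun k hk => ?_
        have := hRpos _ hG (k + 1) (by have := mem_range.1 hk; omega)
        exact (one_le_inv₀ (by linarith)).2 (RR_le_one _ _)
    rw [e1]
    have hp0 : 0 ≤ ∏ k ∈ range (n - s), (RR (k + s + 1) (v ω))⁻¹ := by
      refine Finset.prod_nonneg fun k hk => inv_nonneg.2 ?_
      have := hRpos _ hG (k + s + 1) (by have := mem_range.1 hk; omega)
      linarith
    have hp1 : 0 ≤ ∏ k ∈ range (n - s), (c k)⁻¹ :=
      Finset.prod_nonneg fun k hk => inv_nonneg.2 (by linarith [hc1 k])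
    refine mul_le_mul (mul_le_mul ?_ e2 hp1 (by positivity)) e3 hp0 (by positivity)
    exact pow_le_pow_right₀ (by norm_num) (by omega)
  calc (S.card : ℝ) ≤ _ := hcard
    _ ≤ _ := Finset.sum_le_sum hpt
    _ = (4 ^ n * (5 / (j : ℝ)) ^ g) * ∑ ω ∈ S.filter (fun ω => v ω ∈ U), ∏ k : Fin n, (RR (k + 1) (v ω))⁻¹ := by
      rw [Finset.mul_sum]
    _ ≤ (4 ^ n * (5 / (j : ℝ)) ^ g) * (2 ^ (n * n) * (((n : ℝ) + 1) * 2 ^ E) ^ (2 * s)) :=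
      mul_le_mul_of_nonneg_left hF (by positivity)
    _ = _ := by ring

theorem nonsparse {n E j s D g : ℕ} (hj : 5 ≤ j) (hs : s = 6 * (E + 1)) (hD : D = 32 * j ^ 3 * (E + 1))
    (hsm : s ≤ n) (hg : g + D + n / 2 ≤ n) :
    prob (EV fun v : Fin n → ℝ => (1 / 2 : ℝ) ^ E ≤ ff (fun _ => 1 / 4) v ∧
        16 * j ^ 3 < (univ.filter fun i => v i ≠ 0).card)
      ≤ 8 ^ n * (5 / (j : ℝ)) ^ g * (((n : ℝ) + 1) * 2 ^ E) ^ (2 * s) := by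
  classical
  let P : Finset (Fin n) → (Fin n → ℝ) → Prop := fun J v => (1 / 2 : ℝ) ^ E ≤ ff (fun _ => 1 / 4) v ∧
    ff (fun i => if i ∈ J then 1 / 4 else 0) v ≤ 2 * ff (fun _ => 1 / 8) v ∧
    ff (fun _ => 1 / 8) v ≤ 5 / j * ff (fun _ => 1 / (32 * (j : ℝ) ^ 3)) v
  have h1 : prob (EV fun v : Fin n → ℝ => (1 / 2 : ℝ) ^ E ≤ ff (fun _ => 1 / 4) v ∧
        16 * j ^ 3 < (univ.filter fun i => v i ≠ 0).card)
      ≤ prob (fun ω => ∃ J ∈ univ.filter (fun J : Finset (Fin n) => J.card = n / 2), EV (P J) ω) := by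
    refine prob_mono fun ω => ?_
    rintro ⟨l, v, hv, hE, hc⟩
    obtain ⟨J, hJ, hJ2⟩ := exists_half v
    exact ⟨J, by simpa using hJ, l, v, hv, hE, hJ2, gain (by omega) v hc⟩
  refine h1.trans ((prob_exists_le _ _).trans ?_)
  have h2 : ∀ J ∈ univ.filter (fun J : Finset (Fin n) => J.card = n / 2), prob (EV (P J)) ≤
      4 ^ n * (5 / (j : ℝ)) ^ g * (((n : ℝ) + 1) * 2 ^ E) ^ (2 * s) := by
    intro J hJ
    obtain ⟨σ, hσ, hle⟩ := transport_set J (mem_filter.1 hJ).2 (P J)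
    refine hle.trans ((EV_mono fun v hv => ?_).trans (core hj hs hD hsm hg))
    obtain ⟨a1, a2, a3⟩ := hv
    have key : ∀ μ : Fin n → ℝ, ff μ (fun i => v (σ.symm i)) = ff (fun i => μ (σ i)) v := by
      intro μ
      rw [← ff_perm σ μ]; simp
    rw [key] at a1 
    rw [key, key] at a2 a3
    refine ⟨by rw [RR_n]; exact a1, ?_, a3⟩
    simp only [hσ] at a2
    exact a2
  refine (Finset.sum_le_sum h2).trans ?_
  rw [Finset.sum_const, nsmul_eq_mul]
  have h3 : ((univ.filter (fun J : Finset (Fin n) => J.card = n / 2)).card : ℝ) ≤ 2 ^ n := by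
    have := Finset.card_le_univ (univ.filter (fun J : Finset (Fin n) => J.card = n / 2))
    rw [Fintype.card_finset, Fintype.card_fin] at this
    exact_mod_cast this
  have e8 : (8 : ℝ) ^ n = 2 ^ n * 4 ^ n := by rw [← mul_pow]; norm_num
  rw [e8, mul_assoc, mul_assoc, mul_assoc]
  exact mul_le_mul_of_nonneg_right h3 (by positivity)

end Piece8

section Piece9

theorem prob_fst {α β : Type*} [Fintype α] [Fintype β] [Nonempty β] (E : α → Prop) :
    prob (fun z : α × β => E z.1) = prob E := by
  classical
  rw [prob_eq_sum, prob_eq_sum, Fintype.sum_prod_type, Fintype.card_prod]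
  have hb : (Fintype.card β : ℝ) ≠ 0 := by exact_mod_cast Fintype.card_ne_zero
  have e : ∀ x : α, ∑ y : β, (if E (x, y).1 then (1 : ℝ) else 0) = Fintype.card β * (if E x then 1 else 0) := by
    intro x; by_cases h : E x <;> simp [h]
  rw [Finset.sum_congr rfl fun x _ => e x, ← Finset.mul_sum]
  push_cast
  rw [← mul_assoc]
  congr 1
  by_cases ha : (Fintype.card α : ℝ) = 0
  · simp [ha]
  · field_simp

theorem prob_cond {α β : Type*} [Fintype α] [Fintype β] [Nonempty α] [Nonempty β] (E : α → β → Prop) (δ : ℝ)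
    (h : ∀ a, prob (E a) ≤ δ) : prob (fun z : α × β => E z.1 z.2) ≤ δ := by
  classical
  rw [prob_eq_sum, Fintype.sum_prod_type, Fintype.card_prod]
  have hb : (0 : ℝ) < Fintype.card β := by exact_mod_cast Fintype.card_pos
  have ha : (0 : ℝ) < Fintype.card α := by exact_mod_cast Fintype.card_pos
  have h' : ∀ a ∈ (univ : Finset α), ∑ b, (if E a b then (1 : ℝ) else 0) ≤ Fintype.card β * δ := by
    intro a _
    have := h a
    rw [prob_eq_sum, one_div, inv_mul_le_iff₀ hb] at this
    exact this
  have := Finset.sum_le_sum h'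
  rw [Finset.sum_const, nsmul_eq_mul, Finset.card_univ] at this
  push_cast
  rw [one_div, inv_mul_le_iff₀ (by positivity), mul_assoc]
  exact this

def ES {n : ℕ} (ω : Fin n → Fin n → Bool) (l : ℝ) : Submodule ℝ (Fin n → ℝ) :=
  Module.End.eigenspace (Matrix.toLin' (symMat ℝ ω)) l

theorem mem_ES {n : ℕ} (ω : Fin n → Fin n → Bool) (l : ℝ) (v : Fin n → ℝ) :
    v ∈ ES ω l ↔ symMat ℝ ω *ᵥ v = l • v := by
  unfold ES
  rw [Module.End.mem_eigenspace_iff, Matrix.toLin'_apply]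

def NB {n : ℕ} (k : ℕ) (ω : Fin n → Fin n → Bool) : Prop := ∃ l, k ≤ Module.finrank ℝ (ES ω l)

theorem eigs {n : ℕ} (ω : Fin n → Fin n → Bool) :
    ∃ S : Finset ℝ, S.card ≤ n ∧ ∀ l, ES ω l ≠ ⊥ → l ∈ S := by
  classical
  refine ⟨(symMat ℝ ω).charpoly.roots.toFinset, ?_, fun l hl => ?_⟩
  · refine (Multiset.toFinset_card_le _).trans ((Polynomial.card_roots' _).trans ?_)
    rw [Matrix.charpoly_natDegree_eq_dim]; simp
  · have : Module.End.HasEigenvalue (Matrix.toLin' (symMat ℝ ω)) l := hl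
    rw [Module.End.hasEigenvalue_iff_isRoot_charpoly, Matrix.charpoly_toLin'] at this
    rw [Multiset.mem_toFinset, Polynomial.mem_roots (Matrix.charpoly_monic _).ne_zero]
    exact this

theorem walk_det {n k : ℕ} (hk : 2 ≤ k) (ω : Fin n → Fin n → Bool) (x y)
    (h : ∀ l, ES ω l ≠ ⊥ → ∃ v ∈ ES ω l, ∑ i, signb ℝ (x (Fin.castSucc i)) * v i ≠ 0)
    (hN : NB k (glue ω x y)) : NB (k + 1) ω := by
  obtain ⟨l, hl⟩ := hN
  refine ⟨l, ?_⟩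
  have hmem : ∀ u ∈ ES (glue ω x y) l, (symMat ℝ ω *ᵥ (fun i => u i.castSucc)
        = fun i => l * u i.castSucc - signb ℝ (x i.castSucc) * u (Fin.last n)) ∧
      ∑ i, signb ℝ (x i) * u i = l * u (Fin.last n) := by
    intro u hu
    rw [mem_ES, symMat_glue_mulVec] at hu
    simpa using hu
  by_cases hW : ES ω l = ⊥
  · exfalso
    have h1 := finrank_le_ker_add_one (ES (glue ω x y) l) (LinearMap.proj (Fin.last n))
    have h2 : (ES (glue ω x y) l ⊓ LinearMap.ker (LinearMap.proj (R := ℝ) (φ := fun _ => ℝ) (Fin.last n)) : Submodule ℝ _) = ⊥ := by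
      rw [Submodule.eq_bot_iff]
      rintro u ⟨hu, hu0⟩
      have hu0' : u (Fin.last n) = 0 := hu0
      obtain ⟨a1, -⟩ := hmem u hu
      have : (fun i : Fin n => u i.castSucc) ∈ ES ω l := by
        rw [mem_ES, a1]; funext i; simp [hu0']
      rw [hW, Submodule.mem_bot] at this
      funext i
      refine Fin.lastCases hu0' (fun i => congrFun this i) i
    rw [h2, finrank_bot] at h1
    omega
  · obtain ⟨v, hv, hxv⟩ := h l hW
    rw [mem_ES] at hv
    have hlast : ∀ u ∈ ES (glue ω x y) l, u (Fin.last n) = 0 := by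
      intro u hu
      obtain ⟨a1, -⟩ := hmem u hu
      have s1 : v ⬝ᵥ (symMat ℝ ω *ᵥ (fun i => u i.castSucc)) = (symMat ℝ ω *ᵥ v) ⬝ᵥ (fun i => u i.castSucc) := by
        rw [Matrix.dotProduct_mulVec, ← Matrix.mulVec_transpose]
        congr 2
        ext i j; rw [Matrix.transpose_apply, symMat_comm]
      rw [a1, hv] at s1
      simp only [dotProduct, Pi.smul_apply, smul_eq_mul] at s1
      have s2 : (∑ i, signb ℝ (x (Fin.castSucc i)) * v i) * u (Fin.last n) = 0 := by
        rw [Finset.sum_mul]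
        have : ∑ i, (l * v i * u (Fin.castSucc i) - v i * (l * u (Fin.castSucc i) - signb ℝ (x i.castSucc) * u (Fin.last n))) = 0 := by
          rw [Finset.sum_sub_distrib, s1, sub_self]
        rw [← this]
        exact Finset.sum_congr rfl fun i _ => by ring
      exact (mul_eq_zero.1 s2).resolve_left hxv
    let X : (Fin n → ℝ) →ₗ[ℝ] ℝ := dotL fun i => signb ℝ (x (Fin.castSucc i))
    have h3 := finrank_ker_lt (ES ω l) X ⟨v, (mem_ES _ _ _).2 hv, by simpa [X, dotL_apply] using hxv⟩
    let R : (Fin (n + 1) → ℝ) →ₗ[ℝ] (Fin n → ℝ) := LinearMap.funLeft ℝ ℝ Fin.castSucc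
    have h4 : Module.finrank ℝ (ES (glue ω x y) l) ≤ Module.finrank ℝ (ES ω l ⊓ LinearMap.ker X : Submodule ℝ _) := by
      have hR : ∀ u ∈ ES (glue ω x y) l, R u ∈ (ES ω l ⊓ LinearMap.ker X : Submodule ℝ _) := by
        intro u hu
        obtain ⟨a1, a2⟩ := hmem u hu
        have a0 := hlast u hu
        constructor
        · change (fun i : Fin n => u i.castSucc) ∈ ES ω l
          rw [mem_ES, a1]; funext i; simp [a0]
        · rw [Fin.sum_univ_castSucc, a0] at a2
          simpa [X, dotL_apply, R, LinearMap.funLeft_apply] using a2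
      refine LinearMap.finrank_le_finrank_of_injective (f := R.restrict hR) ?_
      intro u u' huu
      have e : R u.1 = R u'.1 := congrArg Subtype.val huu
      apply Subtype.ext
      funext i
      refine Fin.lastCases ?_ (fun i => congrFun e i) i
      rw [hlast _ u.2, hlast _ u'.2]
    omega

def BAD (n E : ℕ) : (Fin n → Fin n → Bool) → Prop :=
  EV fun v : Fin n → ℝ => v ≠ 0 ∧ (1 / 2 : ℝ) ^ E ≤ ff (fun _ => 1 / 4) v

theorem walk_step {n k : ℕ} (E : ℕ) (hk : 2 ≤ k) :
    prob (NB (n := n + 1) k) ≤ prob (NB (n := n) (k + 1)) + (prob (BAD n E) + n * (1 / 2 : ℝ) ^ E) := by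
  classical
  rw [← prob_equiv (glueEquiv n)]
  let B : (Fin n → Fin n → Bool) → (Fin (n + 1) → Bool) × (Fin n → Bool) → Prop := fun ω z =>
    ¬ BAD n E ω ∧ ∃ l, ES ω l ≠ ⊥ ∧ ∀ v ∈ ES ω l, ∑ i, signb ℝ (z.1 (Fin.castSucc i)) * v i = 0
  have h1 : prob (fun z => NB k (glueEquiv n z)) ≤ prob (fun z : (Fin n → Fin n → Bool) × (Fin (n + 1) → Bool) × (Fin n → Bool) =>
      NB (k + 1) z.1 ∨ (BAD n E z.1 ∨ B z.1 z.2)) := by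
    refine prob_mono ?_
    rintro ⟨ω, x, y⟩ hN
    by_cases hB : BAD n E ω
    · exact Or.inr (Or.inl hB)
    by_cases hl : ∀ l, ES ω l ≠ ⊥ → ∃ v ∈ ES ω l, ∑ i, signb ℝ (x (Fin.castSucc i)) * v i ≠ 0
    · exact Or.inl (walk_det hk ω x y hl hN)
    · push Not at hl
      exact Or.inr (Or.inr ⟨hB, hl⟩)
  refine h1.trans ((prob_or_le _ _).trans (add_le_add (le_of_eq (prob_fst _)) ((prob_or_le _ _).trans
    (add_le_add (le_of_eq (prob_fst _)) (prob_cond B _ ?_)))))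
  intro ω
  by_cases hB : BAD n E ω
  · have : prob (B ω) ≤ 0 := by
      rw [prob_eq_sum]; simp [B, hB]
    exact this.trans (by positivity)
  obtain ⟨S, hS, hS2⟩ := eigs ω
  have hch : ∀ l, ∃ v, ES ω l ≠ ⊥ → v ∈ ES ω l ∧ v ≠ 0 := by
    intro l
    by_cases h : ES ω l = ⊥
    · exact ⟨0, fun h' => absurd h h'⟩
    · obtain ⟨v, h1, h2⟩ := Submodule.exists_mem_ne_zero_of_ne_bot h
      exact ⟨v, fun _ => ⟨h1, h2⟩⟩
  choose v hv using hch
  have h2 : prob (B ω) ≤ prob (fun z : (Fin (n + 1) → Bool) × (Fin n → Bool) => ∃ l ∈ S,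
      (ES ω l ≠ ⊥ ∧ ∑ i, signb ℝ (z.1 (Fin.castSucc i)) * v l i = 0)) := by
    refine prob_mono ?_
    rintro z ⟨-, l, hl, hz⟩
    exact ⟨l, hS2 l hl, hl, hz _ (hv l hl).1⟩
  refine h2.trans ((prob_exists_le _ _).trans ?_)
  have h3 : ∀ l ∈ S, prob (fun z : (Fin (n + 1) → Bool) × (Fin n → Bool) =>
      (ES ω l ≠ ⊥ ∧ ∑ i, signb ℝ (z.1 (Fin.castSucc i)) * v l i = 0)) ≤ (1 / 2 : ℝ) ^ E := by
    intro l _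
    by_cases hl : ES ω l = ⊥
    · rw [prob_eq_sum]; simp [hl]
    · have hlt : ff (fun _ => 1 / 4) (v l) ≤ (1 / 2 : ℝ) ^ E := by
        by_contra hcon
        exact hB ⟨l, v l, (mem_ES _ _ _).1 (hv l hl).1, (hv l hl).2, (not_le.1 hcon).le⟩
      refine le_trans ?_ hlt
      have e1 := prob_fst (β := Fin n → Bool) (fun x : Fin (n + 1) → Bool =>
        ES ω l ≠ ⊥ ∧ ∑ i, signb ℝ (x (Fin.castSucc i)) * v l i = 0)
      rw [e1]
      have e2 := prob_init (fun x : Fin n → Bool => ∑ i, signb ℝ (x i) * v l i = 0)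
      have e3 := prob_le_ff (v l) univ 0
      simp only [mem_univ, if_true] at e3
      exact (prob_mono fun x hx => hx.2).trans (e2.le.trans e3)
  refine (Finset.sum_le_sum h3).trans ?_
  rw [Finset.sum_const, nsmul_eq_mul]
  exact mul_le_mul_of_nonneg_right (by exact_mod_cast hS) (by positivity)

theorem walk (E m t : ℕ) : ∀ k, 2 ≤ k → prob (NB (n := m + t) k) ≤ prob (NB (n := m) (k + t)) +
    ∑ i ∈ range t, (prob (BAD (m + i) E) + ((m + i : ℕ) : ℝ) * (1 / 2 : ℝ) ^ E) := by
  induction t with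
  | zero => intro k _; simp
  | succ t ih =>
    intro k hk
    have h1 := walk_step (n := m + t) E hk
    have h2 := ih (k + 1) (by omega)
    rw [Finset.sum_range_succ]
    have e : k + (t + 1) = k + 1 + t := by ring
    rw [e]
    change prob (NB (n := m + t + 1) k) ≤ _
    linarith

theorem walk_final (E m t : ℕ) (h : m < 2 + t) : prob (NB (n := m + t) 2) ≤
    ∑ i ∈ range t, (prob (BAD (m + i) E) + ((m + i : ℕ) : ℝ) * (1 / 2 : ℝ) ^ E) := by
  classical
  have h1 := walk E m t 2 le_rfl
  have h2 : prob (NB (n := m) (2 + t)) ≤ 0 := by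
    have : ∀ ω, ¬ NB (n := m) (2 + t) ω := by
      rintro ω ⟨l, hl⟩
      have := Submodule.finrank_le (ES ω l)
      simp at this
      omega
    rw [prob_eq_sum]; simp [this]
  linarith

theorem not_squarefree {n : ℕ} (ω : Fin n → Fin n → Bool)
    (h : ¬ Squarefree (Matrix.charpoly (symMat ℝ ω))) : NB 2 ω := by
  classical
  have hA : (symMat ℝ ω).IsHermitian := by
    ext i j; simp [Matrix.conjTranspose_apply, symMat_comm ω j i]
  have hni : ¬ Function.Injective hA.eigenvalues := by
    intro hinj
    apply h
    rw [hA.charpoly_eq]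
    apply Polynomial.Separable.squarefree
    apply Polynomial.separable_prod_X_sub_C_iff.2
    intro i j hij
    exact hinj (by simpa using hij)
  rw [Function.Injective] at hni
  push Not at hni
  obtain ⟨i, j, hij, hne⟩ := hni
  refine ⟨hA.eigenvalues i, ?_⟩
  have hli : LinearIndependent ℝ ![(hA.eigenvectorBasis i).ofLp, (hA.eigenvectorBasis j).ofLp] := by
    have h0 := hA.eigenvectorBasis.orthonormal.linearIndependent
    have h1 := h0.comp ![i, j] (by
      intro a b hab
      fin_cases a <;> fin_cases b <;> simp_all)
    have h2 := h1.map' (WithLp.linearEquiv 2 ℝ (Fin n → ℝ)).toLinearMap (LinearEquiv.ker _)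
    have heq : ![(hA.eigenvectorBasis i).ofLp, (hA.eigenvectorBasis j).ofLp] =
        (WithLp.linearEquiv 2 ℝ (Fin n → ℝ)).toLinearMap ∘ hA.eigenvectorBasis ∘ ![i, j] := by
      funext a
      fin_cases a <;> rfl
    rw [heq]
    exact h2
  have hsub : Submodule.span ℝ (Set.range ![(hA.eigenvectorBasis i).ofLp, (hA.eigenvectorBasis j).ofLp])
      ≤ ES ω (hA.eigenvalues i) := by
    rw [Submodule.span_le]
    rintro _ ⟨a, rfl⟩
    fin_cases a
    · exact (mem_ES _ _ _).2 (hA.mulVec_eigenvectorBasis i)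
    · rw [hij]; exact (mem_ES _ _ _).2 (hA.mulVec_eigenvectorBasis j)
  have h3 := Submodule.finrank_mono hsub
  rw [finrank_span_eq_card hli] at h3
  simpa using h3

theorem prob_compl {Ω : Type*} [Fintype Ω] [Nonempty Ω] (E : Ω → Prop) : prob E = 1 - prob (fun x => ¬ E x) := by
  classical
  rw [prob_eq_sum, prob_eq_sum, eq_sub_iff_add_eq, ← mul_add, ← Finset.sum_add_distrib]
  have : ∀ x, (if E x then (1 : ℝ) else 0) + (if ¬ E x then 1 else 0) = 1 := by
    intro x; by_cases h : E x <;> simp [h]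
  simp only [this]
  simp

end Piece9

section Piece10

theorem half_pow_ge (E : ℕ) : Real.exp (-(E : ℝ)) ≤ (1 / 2 : ℝ) ^ E := by
  have h : Real.exp (-(E : ℝ)) = (Real.exp (-1)) ^ E := by
    rw [← Real.exp_nat_mul]; congr 1; ring
  rw [h]
  refine pow_le_pow_left₀ (Real.exp_pos _).le ?_ _
  rw [Real.exp_neg, one_div]
  apply inv_anti₀ (by norm_num)
  linarith [Real.add_one_le_exp (1 : ℝ)]

theorem pow_le_exp {a b : ℝ} (ha : 0 ≤ a) (h : a ≤ Real.exp b) (k : ℕ) (c : ℝ) (hc : k * b ≤ c) :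
    a ^ k ≤ Real.exp c := by
  calc a ^ k ≤ (Real.exp b) ^ k := pow_le_pow_left₀ ha h k
    _ = Real.exp (k * b) := by rw [← Real.exp_nat_mul]
    _ ≤ _ := Real.exp_le_exp.2 hc

set_option maxHeartbeats 1000000 in
theorem bad_bound (n : ℕ) (u L r x : ℝ) (j E : ℕ) (hu : u ^ 10 = n) (hL : Real.exp L = n)
    (hLb : 64000000 ≤ L) (hLu : L ≤ u) (hr0 : 0 ≤ r) (hr : r ^ 2 = L) (hx0 : 0 ≤ x) (hx : x ^ 2 = n * r)
    (hj1 : (j : ℝ) ≤ u) (hj2 : u < j + 1) (hE1 : (E : ℝ) ≤ x)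
    (m : ℕ) (hm1 : n / 2 ≤ m) (hm2 : m ≤ n) : prob (BAD m E) ≤ 2 * (1 / 2 : ℝ) ^ E := by
  have hu1 : 64000000 ≤ u := hLb.trans hLu
  have hr8 : 8000 ≤ r := by nlinarith
  have hrL : r ≤ L := by nlinarith
  have hp : ∀ k, (1 : ℝ) ≤ u ^ k := fun k => one_le_pow₀ (by linarith)
  have hpm : ∀ k, 64000000 * u ^ k ≤ u ^ (k + 1) := by
    intro k; rw [pow_succ, mul_comm]; exact mul_le_mul_of_nonneg_left hu1 (by linarith [hp k])
  have hpm9 : 64000000 * u ^ 9 ≤ u ^ 10 := hpm 9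
  have hx6 : x ≤ u ^ 6 := by
    rw [← pow_le_pow_iff_left₀ hx0 (by linarith [hp 6]) two_ne_zero, hx, ← hu]
    calc u ^ 10 * r ≤ u ^ 10 * u := mul_le_mul_of_nonneg_left (by linarith) (by linarith [hp 10])
      _ = u ^ 11 := by ring
      _ ≤ u ^ 12 := pow_le_pow_right₀ (by linarith) (by norm_num)
      _ = (u ^ 6) ^ 2 := by ring
  have hx1 : 1 ≤ x := by
    have : 1 ≤ x ^ 2 := by rw [hx, ← hu]; nlinarith [hp 10]
    nlinarith
  have hj0 : (0 : ℝ) ≤ j := by positivity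
  have hj3 : (j : ℝ) ^ 3 ≤ u ^ 3 := pow_le_pow_left₀ hj0 hj1 3
  have hj5 : 5 ≤ j := by
    have : (5 : ℝ) < j := by linarith
    exact_mod_cast this.le
  have hE0 : (0 : ℝ) ≤ E := by positivity
  have hn0 : (1000 : ℝ) ≤ n := by rw [← hu]; linarith [hpm9, hp 9]
  have hn0' : 1000 ≤ n := by exact_mod_cast hn0
  have hDr : (16 : ℝ) * (32 * (j : ℝ) ^ 3 * (E + 1)) ≤ n := by
    calc (16 : ℝ) * (32 * (j : ℝ) ^ 3 * (E + 1)) ≤ 16 * (32 * u ^ 3 * (u ^ 6 + 1)) := by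
          gcongr; linarith
      _ = 512 * u ^ 9 + 512 * u ^ 3 := by ring
      _ ≤ n := by
          rw [← hu]
          have : u ^ 3 ≤ u ^ 9 := pow_le_pow_right₀ (by linarith) (by norm_num)
          linarith [hpm9, hp 9]
  have hD : 16 * (32 * j ^ 3 * (E + 1)) ≤ n := by exact_mod_cast hDr
  have hsD : 6 * (E + 1) ≤ 32 * j ^ 3 * (E + 1) := by
    refine Nat.mul_le_mul_right _ ?_
    have : 1 ≤ j ^ 3 := Nat.one_le_pow _ _ (by omega)
    omega
  have hkD : 32 * j ^ 3 ≤ 32 * j ^ 3 * (E + 1) := Nat.le_mul_of_pos_right _ (by omega)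
  have hns := nonsparse (n := m) (E := E) (j := j) (g := n / 8) hj5 rfl rfl (by omega) (by omega)
  have hsp := sparse (n := m) (k := 16 * j ^ 3) (by omega)
  have hcov : prob (BAD m E) ≤ _ := (prob_mono (F := fun ω =>
      EV (fun v : Fin m → ℝ => v ≠ 0 ∧ (univ.filter fun i => v i ≠ 0).card ≤ 16 * j ^ 3) ω ∨
      EV (fun v : Fin m → ℝ => (1 / 2 : ℝ) ^ E ≤ ff (fun _ => 1 / 4) v ∧
        16 * j ^ 3 < (univ.filter fun i => v i ≠ 0).card) ω) (by
      rintro ω ⟨l, v, hv, hv0, hE⟩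
      rcases le_or_gt (univ.filter fun i => v i ≠ 0).card (16 * j ^ 3) with h | h
      · exact Or.inl ⟨l, v, hv, hv0, h⟩
      · exact Or.inr ⟨l, v, hv, hE, h⟩)).trans (prob_or_le _ _)
  have hmn : (m : ℝ) ≤ n := by exact_mod_cast hm2
  have hm0 : (0 : ℝ) ≤ m := by positivity
  have hm1' : (m : ℝ) + 1 ≤ Real.exp (2 * L) := by
    have : Real.exp (2 * L) = (n : ℝ) * n := by rw [two_mul, Real.exp_add, hL]
    rw [this]; nlinarith
  have hm2' : ((m : ℝ) + 1) * 2 ≤ Real.exp (2 * L) := by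
    have : Real.exp (2 * L) = (n : ℝ) * n := by rw [two_mul, Real.exp_add, hL]
    rw [this]; nlinarith
  have hL0 : 0 ≤ L := by linarith
  have hk : ((16 * j ^ 3 : ℕ) : ℝ) ≤ 16 * u ^ 3 := by push_cast; linarith
  have b1 : (m : ℝ) ^ (16 * j ^ 3) * ((((m : ℝ) + 1) * 2) ^ (2 * (16 * j ^ 3)) * (3 / 4) ^ (m - 16 * j ^ 3))
      ≤ (1 / 2 : ℝ) ^ E := by
    have a1 : (m : ℝ) ^ (16 * j ^ 3) ≤ Real.exp (16 * u ^ 3 * L) :=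
      pow_le_exp hm0 (by rw [hL]; exact hmn) _ _ (mul_le_mul_of_nonneg_right hk hL0)
    have a2 : (((m : ℝ) + 1) * 2) ^ (2 * (16 * j ^ 3)) ≤ Real.exp (64 * u ^ 3 * L) := by
      refine pow_le_exp (by positivity) hm2' _ _ ?_
      rw [Nat.cast_mul]
      have := mul_le_mul_of_nonneg_right hk hL0
      push_cast at this ⊢
      linarith
    have a3 : (3 / 4 : ℝ) ^ (m - 16 * j ^ 3) ≤ Real.exp (-(n / 32)) := by
      refine pow_le_exp (b := -(1 / 4)) (by norm_num) ?_ _ _ ?_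
      · linarith [Real.add_one_le_exp (-(1 / 4) : ℝ)]
      · have : n ≤ 8 * (m - 16 * j ^ 3) := by omega
        have : (n : ℝ) ≤ 8 * ((m - 16 * j ^ 3 : ℕ) : ℝ) := by exact_mod_cast this
        linarith
    refine le_trans ?_ (half_pow_ge E)
    calc _ ≤ Real.exp (16 * u ^ 3 * L) * (Real.exp (64 * u ^ 3 * L) * Real.exp (-(n / 32))) := by
          gcongr
      _ = Real.exp (16 * u ^ 3 * L + (64 * u ^ 3 * L + -(n / 32))) := by rw [Real.exp_add, Real.exp_add]
      _ ≤ _ := by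
        apply Real.exp_le_exp.2
        have : u ^ 3 * L ≤ u ^ 4 := by
          rw [pow_succ u 3]; exact mul_le_mul_of_nonneg_left hLu (by linarith [hp 3])
        have h46 : u ^ 4 ≤ u ^ 9 := pow_le_pow_right₀ (by linarith) (by norm_num)
        have h66 : u ^ 6 ≤ u ^ 9 := pow_le_pow_right₀ (by linarith) (by norm_num)
        have := hpm9
        rw [← hu]
        linarith [hp 9]
  have b2 : 8 ^ m * (5 / (j : ℝ)) ^ (n / 8) * (((m : ℝ) + 1) * 2 ^ E) ^ (2 * (6 * (E + 1)))
      ≤ (1 / 2 : ℝ) ^ E := by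
    have a1 : (8 : ℝ) ^ m ≤ Real.exp (3 * n) := by
      refine pow_le_exp (b := 3) (by norm_num) ?_ _ _ (by linarith)
      have : Real.exp 3 = (Real.exp 1) ^ 3 := by rw [← Real.exp_nat_mul]; norm_num
      rw [this]
      calc (8 : ℝ) = 2 ^ 3 := by norm_num
        _ ≤ _ := pow_le_pow_left₀ (by norm_num) (by linarith [Real.add_one_le_exp (1 : ℝ)]) 3
    have a2 : (5 / (j : ℝ)) ^ (n / 8) ≤ Real.exp (-(n * L / 320)) := by
      refine pow_le_exp (b := -(L / 20)) (by positivity) ?_ _ _ ?_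
      · have hsq : Real.exp (L / 20) ^ 20 = u ^ 10 := by
          rw [← Real.exp_nat_mul, hu, ← hL]; congr 1; push_cast; ring
        have hsq2 : Real.exp (L / 20) ^ 2 = u := by
          have : (Real.exp (L / 20) ^ 2) ^ 10 = u ^ 10 := by rw [← pow_mul, ← hsq]
          exact (pow_left_inj₀ (by positivity) (by linarith) (by norm_num)).1 this
        rw [Real.exp_neg]
        have he : 0 < Real.exp (L / 20) := Real.exp_pos _
        have he2 : 6 ≤ Real.exp (L / 20) := by
          rw [← pow_le_pow_iff_left₀ (by norm_num) he.le two_ne_zero, hsq2]; linarith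
        have he3 := mul_le_mul_of_nonneg_right he2 he.le
        rw [← sq, hsq2] at he3
        rw [div_le_iff₀ (by linarith), inv_mul_eq_div, le_div_iff₀ he]
        linarith
      · have : n ≤ 16 * (n / 8) := by omega
        have : (n : ℝ) ≤ 16 * ((n / 8 : ℕ) : ℝ) := by exact_mod_cast this
        have := mul_le_mul_of_nonneg_right this hL0
        linarith
    have a3 : (((m : ℝ) + 1) * 2 ^ E) ^ (2 * (6 * (E + 1))) ≤ Real.exp (n + 24 * (n * r)) := by
      refine pow_le_exp (b := 2 * L + E) (by positivity) ?_ _ _ ?_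
      · rw [Real.exp_add]
        refine mul_le_mul hm1' ?_ (by positivity) (Real.exp_pos _).le
        exact pow_le_exp (b := 1) (by norm_num) (by linarith [Real.add_one_le_exp (1 : ℝ)]) _ _ (by linarith)
      · push_cast
        have h1 : (E : ℝ) + 1 ≤ 2 * x := by linarith
        have h2 : 2 * (6 * ((E : ℝ) + 1)) * (2 * L + E) ≤ 2 * (6 * (2 * x)) * (2 * L + x) := by gcongr
        have h3 : x * L ≤ u ^ 7 := by
          rw [pow_succ u 6]; exact mul_le_mul hx6 hLu hL0 (by linarith [hp 6])
        have h4 : u ^ 7 ≤ u ^ 9 := pow_le_pow_right₀ (by linarith) (by norm_num)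
        have h5 := hpm9
        have h6 : 2 * (6 * (2 * x)) * (2 * L + x) = 48 * (x * L) + 24 * x ^ 2 := by ring
        rw [h6, hx] at h2
        have h7 : 48 * (x * L) ≤ n := by rw [← hu]; linarith [hp 9]
        linarith
    refine le_trans ?_ (half_pow_ge E)
    calc _ ≤ Real.exp (3 * n) * Real.exp (-(n * L / 320)) * Real.exp (n + 24 * (n * r)) := by
          gcongr
      _ = Real.exp (3 * n + -(n * L / 320) + (n + 24 * (n * r))) := by
        rw [Real.exp_add (3 * (n : ℝ) + _), Real.exp_add (3 * (n : ℝ))]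
      _ ≤ _ := by
        apply Real.exp_le_exp.2
        have h66 : u ^ 6 ≤ u ^ 10 := pow_le_pow_right₀ (by linarith) (by norm_num)
        rw [hu] at h66
        have h1 : 8000 * r ≤ L := by rw [← hr, sq]; exact mul_le_mul_of_nonneg_right hr8 hr0
        have h2 : (n : ℝ) * (8000 * r) ≤ n * L := mul_le_mul_of_nonneg_left h1 (by linarith)
        have h3 : (n : ℝ) * 8000 ≤ n * r := mul_le_mul_of_nonneg_left hr8 (by linarith)
        linarith
  linarith

theorem final_bound (n : ℕ) (u L r x : ℝ) (hu : u ^ 10 = n) (hL : Real.exp L = n)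
    (hLb : 64000000 ≤ L) (hLu : L ≤ u) (hr0 : 0 ≤ r) (hr : r ^ 2 = L) (hx0 : 0 ≤ x) (hx : x ^ 2 = n * r) :
    prob (NB (n := n) 2) ≤ Real.exp (-(1 / 4) * x) := by
  have hu1 : 64000000 ≤ u := hLb.trans hLu
  have hj1 := Nat.floor_le (show 0 ≤ u by linarith)
  have hj2 := Nat.lt_floor_add_one u
  have hE1 := Nat.floor_le hx0
  have hE2 := Nat.lt_floor_add_one x
  set j := ⌊u⌋₊
  set E := ⌊x⌋₊
  have hbad : ∀ m, n / 2 ≤ m → m ≤ n → prob (BAD m E) ≤ 2 * (1 / 2 : ℝ) ^ E := fun m h1 h2 =>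
    bad_bound n u L r x j E hu hL hLb hLu hr0 hr hx0 hx hj1 hj2 hE1 m h1 h2
  have hp9 : (1 : ℝ) ≤ u ^ 9 := one_le_pow₀ (by linarith)
  have hn1 : (1000 : ℝ) ≤ n := by rw [← hu, pow_succ]; nlinarith
  have hw : prob (NB (n := n) 2) ≤ n * ((2 + n) * (1 / 2 : ℝ) ^ E) := by
    obtain ⟨t, ht⟩ : ∃ t, n = n / 2 + t := ⟨n - n / 2, by omega⟩
    have h1 := walk_final E (n / 2) t (by omega)
    rw [← ht] at h1
    refine h1.trans ?_
    have h2 : ∀ i ∈ range t, prob (BAD (n / 2 + i) E) + ((n / 2 + i : ℕ) : ℝ) * (1 / 2 : ℝ) ^ E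
        ≤ (2 + n) * (1 / 2 : ℝ) ^ E := by
      intro i hi
      have hi := mem_range.1 hi
      have h3 := hbad (n / 2 + i) (by omega) (by omega)
      have h4 : ((n / 2 + i : ℕ) : ℝ) ≤ n := by exact_mod_cast (by omega : n / 2 + i ≤ n)
      have h5 := mul_le_mul_of_nonneg_right h4 (show (0 : ℝ) ≤ (1 / 2) ^ E by positivity)
      linarith
    refine (Finset.sum_le_sum h2).trans ?_
    rw [Finset.sum_const, card_range, nsmul_eq_mul]
    exact mul_le_mul_of_nonneg_right (by exact_mod_cast (by omega : t ≤ n)) (by positivity)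
  refine hw.trans ?_
  have hhalf : (1 / 2 : ℝ) ^ E ≤ Real.exp (-(1 / 2) * (x - 1)) := by
    refine pow_le_exp (b := -(1 / 2)) (by norm_num) ?_ _ _ (by linarith)
    linarith [Real.add_one_le_exp (-(1 / 2) : ℝ)]
  have hnn : (n : ℝ) * (2 + n) ≤ Real.exp (3 * L) := by
    have : Real.exp (3 * L) = (n : ℝ) ^ 3 := by rw [← hL, ← Real.exp_nat_mul]; norm_num
    rw [this]
    have h2 : (2 : ℝ) + n ≤ n * n := by nlinarith
    calc (n : ℝ) * (2 + n) ≤ n * (n * n) := mul_le_mul_of_nonneg_left h2 (by linarith)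
      _ = _ := by ring
  have hxu : u ^ 5 ≤ x := by
    rw [← pow_le_pow_iff_left₀ (by positivity) hx0 two_ne_zero, hx, ← pow_mul, hu]
    have : 1 ≤ r := by nlinarith
    nlinarith
  have hu5 : 64000000 * u ≤ u ^ 5 := by
    have : 64000000 ≤ u ^ 4 := hu1.trans (le_self_pow₀ (by linarith) (by norm_num))
    calc 64000000 * u ≤ u ^ 4 * u := mul_le_mul_of_nonneg_right this (by linarith)
      _ = _ := by ring
  calc (n : ℝ) * ((2 + n) * (1 / 2 : ℝ) ^ E) = (n * (2 + n)) * (1 / 2 : ℝ) ^ E := by ring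
    _ ≤ Real.exp (3 * L) * Real.exp (-(1 / 2) * (x - 1)) := by gcongr
    _ = Real.exp (3 * L + -(1 / 2) * (x - 1)) := by rw [Real.exp_add]
    _ ≤ _ := Real.exp_le_exp.2 (by linarith)

theorem simple_spectrum_aux : ∃ c : ℝ, 0 < c ∧ ∃ n₀ : ℕ, ∀ n : ℕ, n₀ ≤ n →
    prob (fun ω : Fin n → Fin n → Bool => Squarefree (Matrix.charpoly (symMat ℝ ω)))
      ≥ 1 - Real.exp (-c * (n : ℝ) ^ ((1 : ℝ) / 2) * Real.log n ^ ((1 : ℝ) / 4)) := by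
  have e1 : ∀ᶠ n : ℕ in Filter.atTop, (64000000 : ℝ) ≤ Real.log n :=
    (Real.tendsto_log_atTop.comp tendsto_natCast_atTop_atTop).eventually_ge_atTop _
  have e2 : ∀ᶠ n : ℕ in Filter.atTop, Real.log n ≤ (n : ℝ) ^ ((1 : ℝ) / 10) := by
    have h := (isLittleO_log_rpow_atTop (show (0 : ℝ) < 1 / 10 by norm_num)).bound (show (0 : ℝ) < 1 by norm_num)
    have h' := tendsto_natCast_atTop_atTop (R := ℝ) |>.eventually h
    filter_upwards [h'] with n hn
    rw [one_mul, Real.norm_eq_abs, Real.norm_eq_abs, abs_of_nonneg (by positivity : (0 : ℝ) ≤ (n : ℝ) ^ ((1 : ℝ) / 10))] at hn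
    exact (le_abs_self _).trans hn
  obtain ⟨n₀, hn₀⟩ := Filter.eventually_atTop.1 ((e1.and e2).and (Filter.eventually_ge_atTop 1))
  refine ⟨1 / 4, by norm_num, n₀, fun n hn => ?_⟩
  obtain ⟨⟨h1, h2⟩, h3⟩ := hn₀ n hn
  have hn0 : (0 : ℝ) < n := by exact_mod_cast h3
  have hL0 : 0 ≤ Real.log n := by linarith
  have h := final_bound n ((n : ℝ) ^ ((1 : ℝ) / 10)) (Real.log n) (√(Real.log n))
    ((n : ℝ) ^ ((1 : ℝ) / 2) * Real.log n ^ ((1 : ℝ) / 4))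
    (by rw [← Real.rpow_natCast, ← Real.rpow_mul hn0.le]; norm_num) (Real.exp_log hn0) h1 h2 (Real.sqrt_nonneg _)
    (Real.sq_sqrt hL0) (by positivity)
    (by
      rw [mul_pow, ← Real.rpow_natCast, ← Real.rpow_mul hn0.le, ← Real.rpow_natCast, ← Real.rpow_mul hL0,
        Real.sqrt_eq_rpow]
      norm_num)
  rw [prob_compl]
  have h4 : prob (fun ω : Fin n → Fin n → Bool => ¬ Squarefree (Matrix.charpoly (symMat ℝ ω))) ≤ prob (NB (n := n) 2) :=
    prob_mono fun ω hω => not_squarefree ω hω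
  have e : -(1 / 4) * (n : ℝ) ^ ((1 : ℝ) / 2) * Real.log n ^ ((1 : ℝ) / 4)
      = -(1 / 4) * ((n : ℝ) ^ ((1 : ℝ) / 2) * Real.log n ^ ((1 : ℝ) / 4)) := by ring
  rw [e]
  linarith

end Piece10

/-- A random symmetric Rademacher matrix has simple spectrum (equivalently, a
squarefree characteristic polynomial over `ℝ`) with probability at least
`1 - exp(-c n^{1/2} (log n)^{1/4})`. -/
theorem simple_spectrum_symmetric_rademacher :
    ∃ c : ℝ, 0 < c ∧ ∃ n₀ : ℕ, ∀ n : ℕ, n₀ ≤ n →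
      prob (fun ω : Fin n → Fin n → Bool =>
          Squarefree (Matrix.charpoly (symMat ℝ ω)))
        ≥ 1 - Real.exp (-c * (n : ℝ) ^ ((1 : ℝ) / 2) * Real.log n ^ ((1 : ℝ) / 4)) := by
  exact simple_spectrum_aux
end
end
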